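/- For every transversal T of every Kempe coloring of the line graph L(H) of a graph H, there exists a complete minor of L(H) traversed by T, i.e., a set of connected, pairwise disjoint, pairwise adjacent vertex subsets of L(H) each containing exactly one element of T. -/

import Mathlib

/-- The line graph of a simple graph `G`: vertices are the edges of `G`, two
distinct edges are adjacent iff they share an endpoint. -/
def lineGraph {V : Type*} (G : SimpleGraph V) : SimpleGraph G.edgeSet :=
  SimpleGraph.fromRel (fun e f => ∃ v : V, v ∈ (e : Sym2 V) ∧ v ∈ (f : Sym2 V))

/-- `𝔠` is a Kempe coloring of `G`: a partition of the vertex set into independent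
sets such that the union of any two color classes induces a connected subgraph. -/
def KempeColoring {V : Type*} (G : SimpleGraph V) (𝔠 : Set (Set V)) : Prop :=
  (∀ C ∈ 𝔠, C.Nonempty) ∧
  (⋃₀ 𝔠 = Set.univ) ∧
  (∀ C ∈ 𝔠, ∀ D ∈ 𝔠, C ≠ D → Disjoint C D) ∧
  (∀ C ∈ 𝔠, ∀ a ∈ C, ∀ b ∈ C, ¬ G.Adj a b) ∧
  (∀ C ∈ 𝔠, ∀ D ∈ 𝔠, C ≠ D → (G.induce (C ∪ D)).Connected)

/-!
Contraction creates parallel edges, so the argument takes place in loopless multigraphs, by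
induction on the number of edges.

Suppose first that all colors are present at some vertex `v`. By Menger's theorem in the line graph,
either the star of `v` is linked to the transversal by disjoint connected edge sets, which pairwise
meet at `v`, or a set of fewer edges than there are colors separates them. In the second case, a
color missing on the separator has Kempe chains with all other colors that cross the separator, so
every other color occurs there exactly once. Contracting the vertex set behind the separator then
preserves the Kempe coloring, and the minor obtained by induction lifts back along a linkage from
the star of `v` to the separator.

Suppose now that every vertex misses a color, and let `U i` be the set of vertices at which the
color `i` is present. Since the Kempe chains are connected, any two of these sets are equal or
differ in two vertices. Hence either the transversal lives on three vertices, and its edges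
pairwise meet, or the sets are of the form `U i = C \ {x i}`, and counting edges shows that the
graph is the complete graph on `C` with as many colors as vertices. It remains to find, in the line
graph of a complete graph on `n` vertices, a clique minor rooted at `n` given edges. A vertex
lying on one or two of the given edges is removed by induction. If there is no such vertex, then at
least two vertices `z`, `u` lie on none of them; Hall's theorem connects all but one of the given
edges to `z` by disjoint routes, and the last branch set uses the star of `u`.
-/

open Function

open scoped symmDiff

universe u

namespace KempeMinor

section Connectivity

variable {α : Type*} {G : SimpleGraph α} {s : Set α} {a b : α}

theorem connected_induce_iff_forall_exists_adj : (G.induce s).Connected ↔ s.Nonempty ∧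
    ∀ Z, (s ∩ Z).Nonempty → (s \ Z).Nonempty → ∃ x ∈ s ∩ Z, ∃ y ∈ s \ Z, G.Adj x y := by
  refine ⟨fun h => ⟨Set.nonempty_coe_sort.1 h.nonempty, ?_⟩, fun ⟨⟨a, ha⟩, h⟩ => ?_⟩
  · rintro Z ⟨x, hx, hxZ⟩ ⟨y, hy, hyZ⟩
    obtain ⟨p⟩ := h.preconnected ⟨x, hx⟩ ⟨y, hy⟩
    obtain ⟨d, -, hd₁, hd₂⟩ := p.exists_boundary_dart (Subtype.val ⁻¹' Z) hxZ hyZ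
    exact ⟨d.fst, ⟨d.fst.2, hd₁⟩, d.snd, ⟨d.snd.2, hd₂⟩, d.adj⟩
  · let Z : Set α := {y | ∃ hy : y ∈ s, (G.induce s).Reachable ⟨a, ha⟩ ⟨y, hy⟩}
    have hZ : s ⊆ Z := by
      intro y hy
      by_contra hyZ
      obtain ⟨u, ⟨-, hu, hau⟩, w, ⟨hw, hwZ⟩, huw⟩ :=
        h Z ⟨a, ha, ha, SimpleGraph.Reachable.refl _⟩ ⟨y, hy, hyZ⟩
      have huw' : (G.induce s).Adj ⟨u, hu⟩ ⟨w, hw⟩ := huw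
      exact hwZ ⟨hw, hau.trans huw'.reachable⟩
    exact SimpleGraph.connected_iff_exists_forall_reachable _ |>.2
      ⟨⟨a, ha⟩, fun y => (hZ y.2).2⟩

theorem exists_adj_of_connected_induce (h : (G.induce s).Connected) {Z : Set α}
    (ha : a ∈ s ∩ Z) (hb : b ∈ s \ Z) : ∃ x ∈ s ∩ Z, ∃ y ∈ s \ Z, G.Adj x y :=
  (connected_induce_iff_forall_exists_adj.1 h).2 Z ⟨a, ha⟩ ⟨b, hb⟩

theorem connected_induce_singleton (G : SimpleGraph α) (a : α) : (G.induce {a}).Connected :=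
  connected_induce_iff_forall_exists_adj.2 ⟨Set.singleton_nonempty a, by
    rintro Z ⟨x, rfl, hx⟩ ⟨y, rfl, hy⟩
    exact absurd hx hy⟩

theorem connected_induce_insert (hs : (G.induce s).Connected) (hb : b ∈ s) (hab : G.Adj a b) :
    (G.induce (insert a s)).Connected := by
  rw [Set.insert_eq]
  exact SimpleGraph.connected_induce_union (connected_induce_singleton G a).preconnected
    hs.preconnected rfl hb hab

theorem connected_induce_of_isClique (hs : G.IsClique s) (hne : s.Nonempty) :
    (G.induce s).Connected := by
  have := hne.to_subtype
  rw [SimpleGraph.induce_eq_top.2 hs]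
  exact SimpleGraph.connected_top

end Connectivity

section CliqueModel

variable {α β ι : Type*}

/-- A clique minor of `G`, presented as a family `B` of branch sets: connected, pairwise disjoint,
pairwise adjacent, and with the prescribed root `r i` in the `i`-th branch set. -/
structure IsCliqueModel (G : SimpleGraph α) (r : ι → α) (B : ι → Set α) : Prop where
  root_mem (i : ι) : r i ∈ B i
  connected (i : ι) : (G.induce (B i)).Connected
  disjoint : Pairwise (Disjoint on B)
  adj : Pairwise fun i j => ∃ a ∈ B i, ∃ b ∈ B j, G.Adj a b

namespace IsCliqueModel

variable {G : SimpleGraph α} {r : ι → α} {B : ι → Set α}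

theorem of_pairwise_adj (h : Pairwise fun i j => G.Adj (r i) (r j)) :
    IsCliqueModel G r fun i => {r i} where
  root_mem _ := rfl
  connected i := connected_induce_singleton G (r i)
  disjoint _ _ hij := Set.disjoint_singleton.2 (h hij).ne
  adj _ _ hij := ⟨_, rfl, _, rfl, h hij⟩

theorem extend {i₀ : ι} {B : {i // i ≠ i₀} → Set α} {Z : Set α} [DecidableEq ι]
    (hB : IsCliqueModel G (fun i : {i // i ≠ i₀} => r i) B)
    (hr : r i₀ ∈ Z) (hZ : (G.induce Z).Connected) (hdisj : ∀ i, Disjoint Z (B i))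
    (hadj : ∀ i, ∃ a ∈ Z, ∃ b ∈ B i, G.Adj a b) :
    IsCliqueModel G r fun i => if h : i = i₀ then Z else B ⟨i, h⟩ where
  root_mem i := by
    split_ifs with h
    · exact h ▸ hr
    · exact hB.root_mem ⟨i, h⟩
  connected i := by
    by_cases h : i = i₀
    · rwa [dif_pos h]
    · rw [dif_neg h]
      exact hB.connected ⟨i, h⟩
  disjoint i j hij := by
    simp only [onFun]
    split_ifs with hi hj hj
    · exact absurd (hi.trans hj.symm) hij
    · exact hdisj ⟨j, hj⟩
    · exact (hdisj ⟨i, hi⟩).symm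
    · exact hB.disjoint fun h => hij (congrArg Subtype.val h)
  adj i j hij := by
    simp only
    split_ifs with hi hj hj
    · exact absurd (hi.trans hj.symm) hij
    · exact hadj ⟨j, hj⟩
    · obtain ⟨a, ha, b, hb, hab⟩ := hadj ⟨i, hi⟩
      exact ⟨b, hb, a, ha, hab.symm⟩
    · exact hB.adj fun h => hij (congrArg Subtype.val h)

theorem update_root [DecidableEq ι] (hB : IsCliqueModel G r B) {i₁ : ι} {x b : α}
    (hx : ∀ i, x ∉ B i) (hb : b ∈ B i₁) (hxb : G.Adj x b) :
    IsCliqueModel G (update r i₁ x) (update B i₁ (insert x (B i₁))) := by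
  have hsub (i : ι) : B i ⊆ update B i₁ (insert x (B i₁)) i := by
    obtain rfl | hi := eq_or_ne i i₁
    · rw [update_self]
      exact Set.subset_insert x (B i)
    · rw [update_of_ne hi]
  refine ⟨fun i => ?_, fun i => ?_, fun i j hij => ?_, fun i j hij => ?_⟩
  · obtain rfl | hi := eq_or_ne i i₁
    · simp only [update_self]
      exact Set.mem_insert x (B i)
    · simpa only [update_of_ne hi] using hB.root_mem i
  · obtain rfl | hi := eq_or_ne i i₁
    · rw [update_self]
      exact connected_induce_insert (hB.connected i) hb hxb
    · rw [update_of_ne hi]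
      exact hB.connected i
  · have hij' : Disjoint (B i) (B j) := hB.disjoint hij
    obtain rfl | hi := eq_or_ne i i₁
    · simpa [onFun, update_of_ne hij.symm] using ⟨hx j, hij'⟩
    · obtain rfl | hj := eq_or_ne j i₁
      · simpa [onFun, update_of_ne hi] using ⟨hx i, hij'⟩
      · simpa [onFun, update_of_ne hi, update_of_ne hj] using hij'
  · obtain ⟨a, ha, b, hb, hab⟩ := hB.adj hij
    exact ⟨a, hsub i ha, b, hsub j hb, hab⟩

theorem lift {G' : SimpleGraph β} {r' : ι → β} {B : ι → Set β} (hB : IsCliqueModel G' r' B)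
    {W : Set β} (hW : ∀ i, B i ⊆ W) {Φ : β → Set α} (hconn : ∀ e ∈ W, (G.induce (Φ e)).Connected)
    (hdisj : W.PairwiseDisjoint Φ)
    (hadj : ∀ e ∈ W, ∀ f ∈ W, G'.Adj e f → ∃ a ∈ Φ e, ∃ b ∈ Φ f, G.Adj a b)
    (hr : ∀ i, r i ∈ Φ (r' i)) : IsCliqueModel G r fun i => ⋃ e ∈ B i, Φ e where
  root_mem i := Set.mem_biUnion (hB.root_mem i) (hr i)
  connected i := by
    refine connected_induce_iff_forall_exists_adj.2
      ⟨⟨r i, Set.mem_biUnion (hB.root_mem i) (hr i)⟩, ?_⟩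
    rintro Z ⟨x, hx, hxZ⟩ ⟨y, hy, hyZ⟩
    obtain ⟨e, he, hxe⟩ := Set.mem_iUnion₂.1 hx
    obtain ⟨f, hf, hyf⟩ := Set.mem_iUnion₂.1 hy
    by_cases hsplit : ∃ g ∈ B i, (Φ g ∩ Z).Nonempty ∧ (Φ g \ Z).Nonempty
    · obtain ⟨g, hg, ⟨a, ha⟩, b, hb⟩ := hsplit
      obtain ⟨u, hu, w, hw, huw⟩ := exists_adj_of_connected_induce (hconn g (hW i hg)) ha hb
      exact ⟨u, ⟨Set.mem_biUnion hg hu.1, hu.2⟩, w, ⟨Set.mem_biUnion hg hw.1, hw.2⟩, huw⟩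
    · have hpure : ∀ g ∈ B i, ∀ a ∈ Φ g, a ∈ Z → Φ g ⊆ Z := fun g hg a ha haZ b hb =>
        by_contra fun hbZ => hsplit ⟨g, hg, ⟨a, ha, haZ⟩, b, hb, hbZ⟩
      obtain ⟨u, hu, w, hw, huw⟩ := exists_adj_of_connected_induce (hB.connected i)
        (Z := {g | Φ g ⊆ Z}) ⟨he, hpure e he x hxe hxZ⟩ ⟨hf, fun h => hyZ (h hyf)⟩
      obtain ⟨a, ha, b, hb, hab⟩ := hadj u (hW i hu.1) w (hW i hw.1) huw
      exact ⟨a, ⟨Set.mem_biUnion hu.1 ha, hu.2 ha⟩, b,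
        ⟨Set.mem_biUnion hw.1 hb, fun hbZ => hw.2 (hpure w hw.1 b hb hbZ)⟩, hab⟩
  disjoint i j hij := by
    simp only [onFun, Set.disjoint_iUnion_left, Set.disjoint_iUnion_right]
    exact fun f hf e he => hdisj (hW i he) (hW j hf) ((hB.disjoint hij).ne_of_mem he hf)
  adj i j hij := by
    obtain ⟨e, he, f, hf, hef⟩ := hB.adj hij
    obtain ⟨a, ha, b, hb, hab⟩ := hadj e (hW i he) f (hW j hf) hef
    exact ⟨a, Set.mem_biUnion he ha, b, Set.mem_biUnion hf hb, hab⟩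

end IsCliqueModel

end CliqueModel

section LineGraph

variable {V E ι : Type*} {ends : E → Sym2 V}

/-- The line graph of the multigraph with edge type `E` in which `e` joins the two vertices of
`ends e`. Multigraphs are needed because contraction creates parallel edges. -/
def lineGraphOf (ends : E → Sym2 V) : SimpleGraph E :=
  SimpleGraph.fromRel fun e f => ∃ v, v ∈ ends e ∧ v ∈ ends f

theorem lineGraphOf_adj {e f : E} :
    (lineGraphOf ends).Adj e f ↔ e ≠ f ∧ ∃ v, v ∈ ends e ∧ v ∈ ends f := by
  simp only [lineGraphOf, SimpleGraph.fromRel_adj, and_comm (a := _ ∈ ends f), or_self]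

theorem connected_lineGraphOf_of_forall_mem {s : Set E} {v : V} (hne : s.Nonempty)
    (hs : ∀ e ∈ s, v ∈ ends e) : ((lineGraphOf ends).induce s).Connected :=
  connected_induce_of_isClique (fun e he f hf hef =>
    lineGraphOf_adj.2 ⟨hef, v, hs e he, hs f hf⟩) hne

theorem connected_lineGraphOf_insert {s : Set E} {e f : E} {v : V}
    (hs : ((lineGraphOf ends).induce s).Connected) (hf : f ∈ s) (hve : v ∈ ends e)
    (hvf : v ∈ ends f) : ((lineGraphOf ends).induce (insert e s)).Connected := by
  obtain rfl | hef := eq_or_ne e f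
  · rwa [Set.insert_eq_of_mem hf]
  · exact connected_induce_insert hs hf (lineGraphOf_adj.2 ⟨hef, v, hve, hvf⟩)

theorem IsCliqueModel.of_forall_exists_mem {r : ι → E} {B : ι → Set E}
    (root_mem : ∀ i, r i ∈ B i) (connected : ∀ i, ((lineGraphOf ends).induce (B i)).Connected)
    (disjoint : Pairwise (Disjoint on B))
    (share : ∀ i j, i ≠ j → ∃ e ∈ B i, ∃ f ∈ B j, ∃ v, v ∈ ends e ∧ v ∈ ends f) :
    IsCliqueModel (lineGraphOf ends) r B where
  root_mem := root_mem
  connected := connected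
  disjoint := disjoint
  adj i j hij := by
    obtain ⟨e, he, f, hf, h⟩ := share i j hij
    exact ⟨e, he, f, hf, lineGraphOf_adj.2 ⟨(disjoint hij).ne_of_mem he hf, h⟩⟩

theorem exists_mem_ne_of_not_isDiag {e : Sym2 V} (he : ¬e.IsDiag) (x : V) : ∃ w ∈ e, w ≠ x := by
  induction e with | _ a b =>
  by_contra! h
  exact he (Sym2.mk_isDiag_iff.2
    ((h a (Sym2.mem_mk_left a b)).trans (h b (Sym2.mem_mk_right a b)).symm))

theorem exists_mem_ends_mem_ends_of_card_le_three {C : Finset V} (hC : C.card ≤ 3) {p q : Sym2 V}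
    (hp : ¬p.IsDiag) (hq : ¬q.IsDiag) (hpC : ∀ v ∈ p, v ∈ C) (hqC : ∀ v ∈ q, v ∈ C) :
    ∃ v, v ∈ p ∧ v ∈ q := by
  classical
  by_contra! h
  have hdisj : Disjoint p.toFinset q.toFinset := Finset.disjoint_left.2 fun v => by
    simpa only [Sym2.mem_toFinset] using h v
  have hsub : p.toFinset ∪ q.toFinset ⊆ C := Finset.union_subset
    (fun v hv => hpC v (Sym2.mem_toFinset.1 hv)) (fun v hv => hqC v (Sym2.mem_toFinset.1 hv))
  have hcard := Finset.card_le_card hsub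
  rw [Finset.card_union_of_disjoint hdisj, Sym2.card_toFinset_of_not_isDiag p hp,
    Sym2.card_toFinset_of_not_isDiag q hq] at hcard
  omega

theorem IsCliqueModel.of_card_le_three {r : ι → E} (hr : Injective r)
    (hloop : ∀ i, ¬(ends (r i)).IsDiag) {C : Finset V} (hC : C.card ≤ 3)
    (hrC : ∀ i, ∀ v ∈ ends (r i), v ∈ C) :
    IsCliqueModel (lineGraphOf ends) r fun i => {r i} :=
  .of_pairwise_adj fun i j hij => lineGraphOf_adj.2 ⟨hr.ne hij,
    exists_mem_ends_mem_ends_of_card_le_three hC (hloop i) (hloop j) (hrC i) (hrC j)⟩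

end LineGraph

section Menger

variable {V : Type*} {G G' : SimpleGraph V} {A B X Y : Set V} {x y : V}

/-- `(X, Y)` is a separation of `G` from `A` to `B`: every path from `A` to `B` meets `X ∩ Y`. -/
structure IsSeparation (G : SimpleGraph V) (A B X Y : Set V) : Prop where
  left_subset : A ⊆ X
  right_subset : B ⊆ Y
  mem_or_mem (v : V) : v ∈ X ∨ v ∈ Y
  not_adj : ∀ u ∈ X \ Y, ∀ w ∈ Y \ X, ¬G.Adj u w

/-- Disjoint connected sets joining the vertices of `B` to `A`; the set `F b` plays the role of the
path ending in `b`. -/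
structure IsLinkage (G : SimpleGraph V) (A B : Set V) (F : V → Set V) : Prop where
  mem : ∀ b ∈ B, b ∈ F b
  inter_nonempty : ∀ b ∈ B, (F b ∩ A).Nonempty
  connected : ∀ b ∈ B, (G.induce (F b)).Connected
  disjoint : B.PairwiseDisjoint F

theorem IsSeparation.symm (h : IsSeparation G A B X Y) : IsSeparation G B A Y X where
  left_subset := h.right_subset
  right_subset := h.left_subset
  mem_or_mem v := (h.mem_or_mem v).symm
  not_adj u hu w hw huw := h.not_adj w hw u hu huw.symm

theorem IsSeparation.exists_adj_of_deleteEdges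
    (h : IsSeparation (G.deleteEdges {s(x, y)}) A B X Y) (hG : ¬IsSeparation G A B X Y) :
    ∃ u ∈ X \ Y, ∃ w ∈ Y \ X, G.Adj u w ∧ s(u, w) = s(x, y) := by
  by_contra! hne
  exact hG ⟨h.left_subset, h.right_subset, h.mem_or_mem, fun u hu w hw huw =>
    h.not_adj u hu w hw (SimpleGraph.deleteEdges_adj.2 ⟨huw, hne u hu w hw huw⟩)⟩

theorem IsSeparation.inter_union (h : IsSeparation (G.deleteEdges {s(x, y)}) A B X Y)
    (hy : y ∉ X) {P Q : Set V}
    (hPQ : IsSeparation (G.induce X).spanningCoe A (insert x (X ∩ Y)) P Q) :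
    IsSeparation G A B (P ∩ X) (Q ∪ Y) where
  left_subset := Set.subset_inter hPQ.left_subset h.left_subset
  right_subset := h.right_subset.trans Set.subset_union_right
  mem_or_mem v := by
    have := h.mem_or_mem v
    have := hPQ.mem_or_mem v
    grind
  not_adj := by
    rintro u ⟨⟨huP, huX⟩, hu⟩ w ⟨hw, hwPX⟩ huw
    rw [Set.mem_union, not_or] at hu
    by_cases hwX : w ∈ X
    · have hwP : w ∉ P := fun hwP => hwPX ⟨hwP, hwX⟩
      exact hPQ.not_adj u ⟨huP, hu.1⟩ w ⟨(hPQ.mem_or_mem w).resolve_left hwP, hwP⟩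
        (by simp [huX, hwX, huw])
    · refine h.not_adj u ⟨huX, hu.2⟩ w ⟨(h.mem_or_mem w).resolve_left hwX, hwX⟩
        (SimpleGraph.deleteEdges_adj.2 ⟨huw, ?_⟩)
      intro heq
      obtain ⟨rfl, -⟩ | ⟨rfl, -⟩ := Sym2.eq_iff.1 heq
      · exact hu.1 (hPQ.right_subset (Set.mem_insert u _))
      · exact hy huX

theorem IsLinkage.mono {F : V → Set V} (hF : IsLinkage G A B F) (hG : G ≤ G') :
    IsLinkage G' A B F where
  mem := hF.mem
  inter_nonempty := hF.inter_nonempty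
  connected b hb := (hF.connected b hb).mono (SimpleGraph.comap_monotone _ hG)
  disjoint := hF.disjoint

theorem IsLinkage.subset_of_spanningCoe {F : V → Set V}
    (hF : IsLinkage (G.induce X).spanningCoe A B F) (hB : B ⊆ X) : ∀ b ∈ B, F b ⊆ X := by
  intro b hb
  by_contra hsub
  obtain ⟨z, hz, hzX⟩ := Set.not_subset.1 hsub
  obtain ⟨u, -, w, hw, huw⟩ :=
    exists_adj_of_connected_induce (hF.connected b hb) ⟨hF.mem b hb, hB hb⟩ ⟨hz, hzX⟩
  obtain ⟨u', w', -, -, rfl⟩ := (SimpleGraph.map_adj _ _ _ _).1 huw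
  exact hw.2 w'.2

theorem IsLinkage.exists_extend {M I : Set V} {F : V → Set V}
    (hF : IsLinkage (G.induce M).spanningCoe A (M \ I) F) :
    ∃ F', IsLinkage G (A ∪ Mᶜ) Iᶜ F' ∧ Set.EqOn F' F (M \ I) := by
  classical
  let F' (b : V) : Set V := if b ∈ M then F b else {b}
  have hF'_mem {b} (hb : b ∈ M) : F' b = F b := if_pos hb
  have hF'_notMem {b} (hb : b ∉ M) : F' b = {b} := if_neg hb
  have hsub := hF.subset_of_spanningCoe Set.sdiff_subset
  refine ⟨F', ⟨fun b hb => ?_, fun b hb => ?_, fun b hb => ?_, fun b hb b' hb' hne => ?_⟩,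
    fun b hb => hF'_mem hb.1⟩
  · by_cases hbM : b ∈ M
    · exact hF'_mem hbM ▸ hF.mem b ⟨hbM, hb⟩
    · exact hF'_notMem hbM ▸ rfl
  · by_cases hbM : b ∈ M
    · rw [hF'_mem hbM]
      exact (hF.inter_nonempty b ⟨hbM, hb⟩).mono
        (Set.inter_subset_inter_right _ Set.subset_union_left)
    · exact ⟨b, hF'_notMem hbM ▸ rfl, Or.inr hbM⟩
  · by_cases hbM : b ∈ M
    · rw [hF'_mem hbM]
      exact (hF.mono (SimpleGraph.spanningCoe_induce_le G M)).connected b ⟨hbM, hb⟩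
    · rw [hF'_notMem hbM]
      exact connected_induce_singleton G b
  · rw [onFun]
    by_cases hbM : b ∈ M <;> by_cases hbM' : b' ∈ M
    · rw [hF'_mem hbM, hF'_mem hbM']
      exact hF.disjoint ⟨hbM, hb⟩ ⟨hbM', hb'⟩ hne
    · rw [hF'_mem hbM, hF'_notMem hbM']
      exact Set.disjoint_singleton_right.2 fun h => hbM' (hsub b ⟨hbM, hb⟩ h)
    · rw [hF'_notMem hbM, hF'_mem hbM']
      exact Set.disjoint_singleton_left.2 fun h => hbM (hsub b' ⟨hbM', hb'⟩ h)
    · rw [hF'_notMem hbM, hF'_notMem hbM']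
      exact Set.disjoint_singleton.2 hne

theorem spanningCoe_induce_lt (hxy : G.Adj x y) (hy : y ∉ X) : (G.induce X).spanningCoe < G := by
  refine (SimpleGraph.spanningCoe_induce_le G X).lt_of_not_ge fun hle => ?_
  obtain ⟨u, w, -, -, rfl⟩ := (SimpleGraph.map_adj _ _ _ _).1 (hle hxy)
  exact hy w.2

theorem IsLinkage.exists_inter_eq_singleton [Finite V] {F : V → Set V} (hF : IsLinkage G A B F)
    (hcard : A.ncard ≤ B.ncard) : ∃ w : V → V, Set.InjOn w B ∧ ∀ b ∈ B, F b ∩ A = {w b} := by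
  choose! w hw using hF.inter_nonempty
  have hw_inj : Set.InjOn w B := fun b hb b' hb' h =>
    hF.disjoint.elim_set hb hb' (w b) (hw b hb).1 (h ▸ (hw b' hb').1)
  have hw_image : w '' B = A := Set.eq_of_subset_of_ncard_le
    (Set.image_subset_iff.2 fun b hb => (hw b hb).2) (by rwa [hw_inj.ncard_image])
  refine ⟨w, hw_inj, fun b hb => Set.eq_singleton_iff_unique_mem.2 ⟨hw b hb, ?_⟩⟩
  rintro z ⟨hzb, hz⟩
  obtain ⟨b', hb', rfl⟩ := hw_image ▸ hz
  rw [hF.disjoint.elim_set hb hb' (w b') hzb (hw b' hb').1]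

theorem IsLinkage.exists_glue [Finite V] {F F' : V → Set V}
    (hF : IsLinkage G A (insert x (X ∩ Y)) F) (hF' : IsLinkage G (insert y (X ∩ Y)) B F')
    (hFX : ∀ b ∈ insert x (X ∩ Y), F b ⊆ X) (hFY : ∀ b ∈ B, F' b ⊆ Y) (hx : x ∉ Y)
    (hxy : G.Adj x y) (hcard : (insert y (X ∩ Y)).ncard ≤ B.ncard) :
    ∃ F'', IsLinkage G A B F'' := by
  classical
  obtain ⟨w, hw_inj, hw⟩ := hF'.exists_inter_eq_singleton hcard
  have hw_mem (b : V) (hb : b ∈ B) : w b ∈ F' b ∩ insert y (X ∩ Y) := hw b hb ▸ rfl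
  let σ : V → V := fun b => if w b = y then x else w b
  have hσ : ∀ b ∈ B, σ b ∈ insert x (X ∩ Y) := by grind
  have hσ_inj : Set.InjOn σ B := fun b hb b' hb' h => hw_inj hb hb' (by grind)
  have hcross : ∀ b ∈ B, ∀ b' ∈ B, b ≠ b' → Disjoint (F (σ b)) (F' b') := by
    refine fun b hb b' hb' hbb' => Set.disjoint_left.2 fun z hz hz' => ?_
    have hzS : z ∈ X ∩ Y := ⟨hFX _ (hσ b hb) hz, hFY b' hb' hz'⟩
    have hzw : z ∈ ({w b'} : Set V) := hw b' hb' ▸ ⟨hz', Or.inr hzS⟩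
    have hzσ : z = σ b := hF.disjoint.elim_set (Or.inr hzS) (hσ b hb) z (hF.mem z (Or.inr hzS)) hz
    exact hbb' (hw_inj hb hb' (by grind))
  refine ⟨fun b => F (σ b) ∪ F' b, fun b hb => Or.inr (hF'.mem b hb), fun b hb => ?_,
    fun b hb => ?_, fun b hb b' hb' hbb' => ?_⟩
  · exact (hF.inter_nonempty _ (hσ b hb)).mono
      (Set.inter_subset_inter_left A Set.subset_union_left)
  · have hconn := (hF.connected _ (hσ b hb)).preconnected
    have hconn' := (hF'.connected b hb).preconnected
    have hσ_mem := hF.mem _ (hσ b hb)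
    by_cases hwy : w b = y
    · have hσx : σ b = x := if_pos hwy
      exact SimpleGraph.connected_induce_union hconn hconn' (hσx ▸ hσ_mem) (hwy ▸ (hw_mem b hb).1)
        hxy
    · have hσw : σ b = w b := if_neg hwy
      exact SimpleGraph.induce_union_connected hconn hconn'
        ⟨σ b, hσ_mem, hσw ▸ (hw_mem b hb).1⟩
  · rw [onFun, Set.disjoint_union_left, Set.disjoint_union_right, Set.disjoint_union_right]
    exact ⟨⟨hF.disjoint (hσ b hb) (hσ b' hb') (hσ_inj.ne hb hb' hbb'), hcross b hb b' hb' hbb'⟩,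
      (hcross b' hb' b hb hbb'.symm).symm, hF'.disjoint hb hb' hbb'⟩

theorem isLinkage_singleton (hBA : B ⊆ A) : IsLinkage G A B fun b => {b} where
  mem _ _ := rfl
  inter_nonempty b hb := ⟨b, rfl, hBA hb⟩
  connected b _ := connected_induce_singleton G b
  disjoint _ _ _ _ h := Set.disjoint_singleton.2 h

theorem deleteEdges_singleton_lt (hxy : G.Adj x y) : G.deleteEdges {s(x, y)} < G :=
  (SimpleGraph.deleteEdges_le _).lt_of_not_ge fun hle =>
    (SimpleGraph.deleteEdges_adj.1 (hle hxy)).2 rfl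

/-- The separation version of **Menger's theorem**. -/
theorem exists_isLinkage [Finite V]
    (h : ∀ X Y, IsSeparation G A B X Y → B.ncard ≤ (X ∩ Y).ncard) : ∃ F, IsLinkage G A B F := by
  induction G using WellFoundedLT.induction generalizing A B with | ind G ih =>
  obtain rfl | hG := eq_or_ne G ⊥
  · refine ⟨_, isLinkage_singleton fun b hb => ?_⟩
    by_contra hbA
    exact (h A (Aᶜ ∪ B) ⟨subset_rfl, Set.subset_union_right, by grind, by simp⟩).not_gt
      (Set.ncard_lt_ncard ⟨by grind, fun hsub => hbA (hsub hb).1⟩)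
  obtain ⟨x₀, y₀, hxy₀⟩ := SimpleGraph.ne_bot_iff_exists_adj.1 hG
  by_cases hdel : ∀ X Y, IsSeparation (G.deleteEdges {s(x₀, y₀)}) A B X Y → B.ncard ≤ (X ∩ Y).ncard
  · obtain ⟨F, hF⟩ := ih _ (deleteEdges_singleton_lt hxy₀) hdel
    exact ⟨F, hF.mono (SimpleGraph.deleteEdges_le _)⟩
  push Not at hdel
  -- `xy` is the only edge of `G` crossing `(X, Y)`: link `A` to `X ∩ Y + x` inside `X`, link
  -- `X ∩ Y + y` to `B` inside `Y`, and glue the two linkages along `X ∩ Y` and `xy`.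
  obtain ⟨X, Y, hXY, hlt⟩ := hdel
  obtain ⟨x, hx, y, hy, hxy, heq⟩ :=
    hXY.exists_adj_of_deleteEdges fun hG => hlt.not_ge (h X Y hG)
  rw [← heq] at hXY
  have hcard_x : (insert x (X ∩ Y)).ncard ≤ B.ncard := by
    rwa [Set.ncard_insert_of_notMem fun hmem => hx.2 hmem.2]
  have hcard_y : (insert y (X ∩ Y)).ncard ≤ B.ncard := by
    rwa [Set.ncard_insert_of_notMem fun hmem => hy.2 hmem.1]
  obtain ⟨F, hF⟩ := ih _ (spanningCoe_induce_lt hxy hy.2) fun P Q hPQ =>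
    hcard_x.trans ((h _ _ (hXY.inter_union hy.2 hPQ)).trans
      (Set.ncard_le_ncard fun v hv => ⟨hv.1.1, hv.2.elim id fun hvY =>
        hPQ.right_subset (Or.inr ⟨hv.1.2, hvY⟩)⟩))
  have hYX : IsSeparation (G.deleteEdges {s(y, x)}) B A Y X := Sym2.eq_swap (a := x) ▸ hXY.symm
  obtain ⟨F', hF'⟩ := ih (A := insert y (X ∩ Y)) _ (spanningCoe_induce_lt hxy.symm hx.2)
    fun P Q hPQ => (h _ _ (hYX.inter_union hx.2 (Set.inter_comm X Y ▸ hPQ.symm)).symm).trans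
      (Set.ncard_le_ncard fun v hv => ⟨hv.1.elim id fun hvX =>
        hPQ.left_subset (Or.inr ⟨hvX, hv.2.2⟩), hv.2.1⟩)
  exact (hF.mono (SimpleGraph.spanningCoe_induce_le G X)).exists_glue
    (hF'.mono (SimpleGraph.spanningCoe_induce_le G Y))
    (hF.subset_of_spanningCoe (Set.insert_subset hx.1 Set.inter_subset_left))
    (hF'.subset_of_spanningCoe hXY.right_subset) hx.2 hxy hcard_y

end Menger

section Kempe

variable {α K : Type*} {G : SimpleGraph α} {c : α → K}

/-- `c` is a Kempe coloring of `G`, given by the color map rather than by its classes. -/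
structure IsKempe (G : SimpleGraph α) (c : α → K) : Prop where
  ne_of_adj {a b : α} : G.Adj a b → c a ≠ c b
  connected {i j : K} : i ≠ j → (G.induce (c ⁻¹' {i, j})).Connected

theorem IsKempe.exists_adj (h : IsKempe G c) {i j : K} (hij : i ≠ j) {Z : Set α} {a b : α}
    (ha : c a = i ∨ c a = j) (haZ : a ∈ Z) (hb : c b = i ∨ c b = j) (hbZ : b ∉ Z) :
    ∃ x ∈ Z, ∃ y ∉ Z, G.Adj x y ∧ (c x = i ∧ c y = j ∨ c x = j ∧ c y = i) := by
  obtain ⟨x, ⟨hx, hxZ⟩, y, ⟨hy, hyZ⟩, hxy⟩ :=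
    exists_adj_of_connected_induce (h.connected hij) ⟨ha, haZ⟩ ⟨hb, hbZ⟩
  have hne := h.ne_of_adj hxy
  refine ⟨x, hxZ, y, hyZ, hxy, ?_⟩
  obtain rfl | rfl := hx <;> obtain hy | hy := hy <;> simp_all

end Kempe

section Contraction

variable {V E K ι : Type*} {ends : E → Sym2 V} {X : Set V} {v : V}

/-- The edges with both ends in `X`. -/
def inside (ends : E → Sym2 V) (X : Set V) : Set E := {e | ∀ u ∈ ends e, u ∈ X}

/-- The edges with at least one end in `X`. -/
def meeting (ends : E → Sym2 V) (X : Set V) : Set E := {e | ∃ u ∈ ends e, u ∈ X}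

/-- The edges with exactly one end in `X`. -/
def boundary (ends : E → Sym2 V) (X : Set V) : Set E := meeting ends X \ inside ends X

theorem inside_subset_meeting : inside ends X ⊆ meeting ends X :=
  fun e he => ⟨_, (ends e).out_fst_mem, he _ (ends e).out_fst_mem⟩

open Classical in
/-- The multigraph obtained by contracting the vertex set `X` to its vertex `v` and deleting the
edges inside `X`. -/
noncomputable def contractEnds (ends : E → Sym2 V) (X : Set V) (v : V) :
    {e // e ∉ inside ends X} → Sym2 V :=
  fun e => (ends e).map fun u => if u ∈ X then v else u

theorem mem_contractEnds (hv : v ∈ X) {e : {e // e ∉ inside ends X}} {u : V} :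
    u ∈ contractEnds ends X v e ↔ (u ∈ ends e ∧ u ∉ X) ∨ (u = v ∧ ↑e ∈ meeting ends X) := by
  simp only [contractEnds, Sym2.mem_map, meeting, Set.mem_ofPred_eq]
  grind

theorem exists_mem_contractEnds_iff (hv : v ∈ X) {e f : {e // e ∉ inside ends X}} :
    (∃ u, u ∈ contractEnds ends X v e ∧ u ∈ contractEnds ends X v f) ↔
      (∃ u, u ∈ ends e ∧ u ∈ ends f) ∨ (↑e ∈ meeting ends X ∧ ↑f ∈ meeting ends X) := by
  simp only [mem_contractEnds hv, meeting, Set.mem_ofPred_eq]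
  grind

theorem lineGraphOf_contractEnds_adj (hv : v ∈ X) {e f : {e // e ∉ inside ends X}} :
    (lineGraphOf (contractEnds ends X v)).Adj e f ↔ (lineGraphOf ends).Adj e f ∨
      (e ≠ f ∧ ↑e ∈ meeting ends X ∧ ↑f ∈ meeting ends X) := by
  rw [lineGraphOf_adj, lineGraphOf_adj, exists_mem_contractEnds_iff hv, and_or_left, Ne,
    Subtype.ext_iff]

theorem not_isDiag_contractEnds (hv : v ∈ X) (hloop : ∀ e, ¬(ends e).IsDiag)
    (e : {e // e ∉ inside ends X}) : ¬(contractEnds ends X v e).IsDiag := by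
  obtain ⟨e, he⟩ := e
  have hloop := hloop e
  simp only [inside, contractEnds, Set.mem_ofPred_eq] at he ⊢
  generalize ends e = p at hloop he ⊢
  induction p with | _ a b =>
  simp only [Sym2.map_mk, Sym2.mk_isDiag_iff, Sym2.mem_iff] at hloop he ⊢
  grind

theorem mem_meeting_of_adj_inside {e f : E} (h : (lineGraphOf ends).Adj e f)
    (hf : f ∈ inside ends X) : e ∈ meeting ends X := by
  obtain ⟨-, u, hue, huf⟩ := lineGraphOf_adj.1 h
  exact ⟨u, hue, hf u huf⟩

theorem IsKempe.contract {c : E → K} (hK : IsKempe (lineGraphOf ends) c) (hv : v ∈ X)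
    (hinj : Set.InjOn c (boundary ends X)) (hc : ∀ k, ∃ e ∉ inside ends X, c e = k) :
    IsKempe (lineGraphOf (contractEnds ends X v)) fun e => c e where
  ne_of_adj {e f} h := by
    obtain h | ⟨hne, he, hf⟩ := (lineGraphOf_contractEnds_adj hv).1 h
    · exact hK.ne_of_adj h
    · exact hinj.ne ⟨he, e.2⟩ ⟨hf, f.2⟩ (Subtype.coe_ne_coe.2 hne)
  connected {i j} hij := by
    obtain ⟨e₀, he₀, rfl⟩ := hc i
    refine connected_induce_iff_forall_exists_adj.2 ⟨⟨⟨e₀, he₀⟩, Or.inl rfl⟩, ?_⟩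
    rintro Z ⟨a, ha, haZ⟩ ⟨b, hb, hbZ⟩
    by_contra! hno
    simp only [lineGraphOf_contractEnds_adj hv, not_or] at hno
    let M : Prop := ∃ e ∈ (fun e : {e // e ∉ inside ends X} => c e) ⁻¹' {c e₀, j} ∩ Z,
      ↑e ∈ meeting ends X
    -- The edges inside `X` go to the side of `Z` on which the boundary edges lie.
    obtain ⟨x, hx, y, hy, hxy, hcol⟩ := hK.exists_adj hij ha
      (Z := Subtype.val '' Z ∪ {e | e ∈ inside ends X ∧ M}) (Or.inl ⟨a, haZ, rfl⟩) hb (by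
        rintro (⟨b', hb', hbb'⟩ | hb')
        · exact hbZ (Subtype.ext hbb' ▸ hb')
        · exact b.2 hb'.1)
    simp only [Set.mem_union, not_or] at hy
    have hxc : c x = c e₀ ∨ c x = j := hcol.imp And.left And.left
    have hyc : c y = c e₀ ∨ c y = j := (hcol.imp And.right And.right).symm
    have hyZ (hy' : y ∉ inside ends X) : (⟨y, hy'⟩ : {e // e ∉ inside ends X}) ∉ Z :=
      fun h => hy.1 ⟨_, h, rfl⟩
    obtain ⟨x, hxZ, rfl⟩ | ⟨hx, e, he, heX⟩ := hx
    · by_cases hyX : y ∈ inside ends X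
      · exact hy.2 ⟨hyX, x, ⟨hxc, hxZ⟩, mem_meeting_of_adj_inside hxy hyX⟩
      · exact (hno x ⟨hxc, hxZ⟩ ⟨y, hyX⟩ ⟨hyc, hyZ hyX⟩).1 hxy
    · have hyX : y ∉ inside ends X := fun hyX => hy.2 ⟨hyX, e, he, heX⟩
      exact (hno e he ⟨y, hyX⟩ ⟨hyc, hyZ hyX⟩).2 ⟨fun h => hyZ hyX (h ▸ he.2), heX,
        mem_meeting_of_adj_inside hxy.symm hx⟩

theorem IsCliqueModel.of_contractEnds {r : ι → {e // e ∉ inside ends X}}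
    {B : ι → Set {e // e ∉ inside ends X}}
    (hB : IsCliqueModel (lineGraphOf (contractEnds ends X v)) r B) (hv : v ∈ X) {F : E → Set E}
    (hF : IsLinkage ((lineGraphOf ends).induce (meeting ends X)).spanningCoe {e | v ∈ ends e}
      (boundary ends X) F) :
    ∃ B', IsCliqueModel (lineGraphOf ends) (fun i => (r i : E)) B' := by
  obtain ⟨Φ, hΦ, hΦF⟩ := hF.exists_extend
  have hdisj {e f : {e // e ∉ inside ends X}} (hef : e ≠ f) : Disjoint (Φ e) (Φ f) :=
    hΦ.disjoint e.2 f.2 (Subtype.coe_ne_coe.2 hef)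
  have hstar (e : {e // e ∉ inside ends X}) (he : ↑e ∈ meeting ends X) :
      ∃ a ∈ Φ e, v ∈ ends a := by
    rw [hΦF ⟨he, e.2⟩]
    exact hF.inter_nonempty e ⟨he, e.2⟩
  refine ⟨_, hB.lift (W := Set.univ) (fun _ => Set.subset_univ _) (Φ := fun e => Φ e)
    (fun e _ => hΦ.connected e e.2) (fun e _ f _ hef => hdisj hef) (fun e _ f _ hef => ?_)
    fun i => hΦ.mem (r i) (r i).2⟩
  obtain h | ⟨hne, he, hf⟩ := (lineGraphOf_contractEnds_adj hv).1 hef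
  · exact ⟨e, hΦ.mem e e.2, f, hΦ.mem f f.2, h⟩
  · obtain ⟨a, ha, hva⟩ := hstar e he
    obtain ⟨b, hb, hvb⟩ := hstar f hf
    exact ⟨a, ha, b, hb, lineGraphOf_adj.2 ⟨(hdisj hne).ne_of_mem ha hb, v, hva, hvb⟩⟩

end Contraction

section FullVertex

variable {V E K : Type*} {ends : E → Sym2 V} {c : E → K} {r : K → E} {v : V}

theorem IsLinkage.isCliqueModel (hr : Injective r) {F : E → Set E}
    (hF : IsLinkage (lineGraphOf ends) {e | v ∈ ends e} (Set.range r) F) :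
    IsCliqueModel (lineGraphOf ends) r fun k => F (r k) :=
  .of_forall_exists_mem (fun k => hF.mem _ ⟨k, rfl⟩) (fun k => hF.connected _ ⟨k, rfl⟩)
    (fun _ _ hkl => hF.disjoint ⟨_, rfl⟩ ⟨_, rfl⟩ (hr.ne hkl)) fun k l _ => by
      obtain ⟨e, he, hve⟩ := hF.inter_nonempty _ ⟨k, rfl⟩
      obtain ⟨f, hf, hvf⟩ := hF.inter_nonempty _ ⟨l, rfl⟩
      exact ⟨e, he, f, hf, v, hve, hvf⟩

/-- A vertex set `X` such that exactly one color `i` is missing on the boundary of `X`, and every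
other color occurs there exactly once. Contracting it preserves Kempe colorings. -/
structure IsTight (ends : E → Sym2 V) (c : E → K) (X : Set V) (i : K) : Prop where
  inside_nonempty : (inside ends X).Nonempty
  bijOn : Set.BijOn c (boundary ends X) {i}ᶜ

theorem IsSeparation.exists_region {A B P Q : Set E}
    (h : IsSeparation (lineGraphOf ends) A B P Q) :
    ∃ X, P \ Q ⊆ inside ends X ∧ meeting ends X ⊆ P ∧ boundary ends X ⊆ P ∩ Q := by
  let X : Set V := {u | ∃ e ∈ P \ Q, u ∈ ends e}
  have hinside : P \ Q ⊆ inside ends X := fun e he u hu => ⟨e, he, hu⟩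
  have hmeeting : meeting ends X ⊆ P := by
    rintro f ⟨u, huf, e, he, hue⟩
    by_contra hf
    exact h.not_adj e he f ⟨(h.mem_or_mem f).resolve_left hf, hf⟩
      (lineGraphOf_adj.2 ⟨fun hef => hf (hef ▸ he.1), u, hue, huf⟩)
  exact ⟨X, hinside, hmeeting, fun e he =>
    ⟨hmeeting he.1, by_contra fun hQ => he.2 (hinside ⟨hmeeting he.1, hQ⟩)⟩⟩

/-- A color `i` missing on the separator `P ∩ Q` has Kempe chains with all other colors, which must
all cross the separator; hence `P ∩ Q` contains every other color exactly once. -/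
theorem exists_isTight_of_isSeparation [Finite E] (hK : IsKempe (lineGraphOf ends) c)
    (hr : ∀ k, c (r k) = k) (hv : ∀ k, ∃ e, c e = k ∧ v ∈ ends e) {P Q : Set E}
    (hPQ : IsSeparation (lineGraphOf ends) {e | v ∈ ends e} (Set.range r) P Q)
    (hlt : (P ∩ Q).ncard < Nat.card K) :
    ∃ X i, v ∈ X ∧ (∀ k, r k ∉ inside ends X) ∧ IsTight ends c X i := by
  have : Finite K := Finite.of_surjective c fun k => ⟨r k, hr k⟩
  obtain ⟨i, hi⟩ : ∃ i, i ∉ c '' (P ∩ Q) := by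
    by_contra! h
    refine hlt.not_ge ?_
    rw [← Set.ncard_univ, ← Set.eq_univ_of_forall h]
    exact Set.ncard_image_le
  obtain ⟨e₀, he₀, hve₀⟩ := hv i
  have he₀U : e₀ ∈ P \ Q := ⟨hPQ.left_subset hve₀, fun h =>
    hi ⟨e₀, ⟨hPQ.left_subset hve₀, h⟩, he₀⟩⟩
  obtain ⟨X, hinside, hmeeting, hboundary⟩ := hPQ.exists_region
  have hri : r i ∉ inside ends X := fun h =>
    hi ⟨r i, ⟨hmeeting (inside_subset_meeting h), hPQ.right_subset ⟨i, rfl⟩⟩, hr i⟩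
  have himage : c '' boundary ends X = {i}ᶜ := by
    refine Set.Subset.antisymm ?_ fun j hj => ?_
    · rintro _ ⟨e, he, rfl⟩ rfl
      exact hi ⟨e, hboundary he, rfl⟩
    · obtain ⟨x, hx, y, hy, hxy, hcol⟩ := hK.exists_adj (Ne.symm hj) (Or.inl he₀) (hinside he₀U)
        (Or.inl (hr i)) hri
      have hyB : y ∈ boundary ends X := ⟨mem_meeting_of_adj_inside hxy.symm hx, hy⟩
      exact ⟨y, hyB, (hcol.resolve_right fun h => hi ⟨y, hboundary hyB, h.2⟩).2⟩
  have hcard : (P ∩ Q).ncard ≤ (c '' boundary ends X).ncard := by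
    rw [himage, Set.ncard_compl, Set.ncard_singleton]
    omega
  have heq : boundary ends X = P ∩ Q :=
    Set.eq_of_subset_of_ncard_le hboundary (hcard.trans Set.ncard_image_le)
  refine ⟨X, i, hinside he₀U v hve₀, fun k hk => ?_, ⟨e₀, hinside he₀U⟩, himage ▸ ?_⟩
  · have hmem : r k ∈ boundary ends X :=
      heq ▸ ⟨hmeeting (inside_subset_meeting hk), hPQ.right_subset ⟨k, rfl⟩⟩
    exact hmem.2 hk
  · exact (Set.injOn_of_ncard_image_eq (le_antisymm Set.ncard_image_le (heq ▸ hcard))).bijOn_image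

theorem IsTight.exists_isLinkage [Finite E] {X : Set V} {i : K} (hX : IsTight ends c X i)
    (hK : IsKempe (lineGraphOf ends) c) (hv : ∀ k, ∃ e, c e = k ∧ v ∈ ends e) (hvX : v ∈ X) :
    ∃ F, IsLinkage ((lineGraphOf ends).induce (meeting ends X)).spanningCoe {e | v ∈ ends e}
      (boundary ends X) F := by
  have : Finite K := Finite.of_surjective c fun k => (hv k).imp fun _ => And.left
  refine KempeMinor.exists_isLinkage fun P Q hPQ => ?_
  by_contra! hlt
  obtain ⟨a, b, hai, hab, ha, hb⟩ :
      ∃ a b, a ≠ i ∧ a ≠ b ∧ a ∉ c '' (P ∩ Q) ∧ b ∉ c '' (P ∩ Q) := by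
    have hcard : 1 < (c '' (P ∩ Q))ᶜ.ncard := by
      have h₁ : (c '' (P ∩ Q)).ncard ≤ (P ∩ Q).ncard := Set.ncard_image_le
      have h₂ : (boundary ends X).ncard = Nat.card K - 1 := by
        rw [← hX.bijOn.injOn.ncard_image, hX.bijOn.image_eq, Set.ncard_compl, Set.ncard_singleton]
      rw [Set.ncard_compl]
      omega
    obtain ⟨a, ha, b, hb, hab⟩ := (Set.one_lt_ncard).1 hcard
    obtain rfl | hai := eq_or_ne a i
    · exact ⟨b, a, hab.symm, hab.symm, hb, ha⟩
    · exact ⟨a, b, hai, hab, ha, hb⟩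
  obtain ⟨e, rfl, hve⟩ := hv a
  obtain ⟨f, hf, hfa⟩ := hX.bijOn.surjOn hai
  have heP := hPQ.left_subset hve
  -- A Kempe chain of two colors missing on `P ∩ Q` cannot leave `P \ Q` within `meeting ends X`.
  obtain ⟨x, hx, y, hy, hxy, hcol⟩ := hK.exists_adj hab (Z := (P \ Q) ∩ meeting ends X)
    (Or.inl rfl) ⟨⟨heP, fun heQ => ha ⟨e, ⟨heP, heQ⟩, rfl⟩⟩, v, hve, hvX⟩
    (Or.inl hfa) fun h => h.1.2 (hPQ.right_subset hf)
  have hyPQ : y ∉ P ∩ Q := fun h => hcol.elim (fun h' => hb ⟨y, h, h'.2⟩) fun h' => ha ⟨y, h, h'.2⟩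
  have hx_inside : x ∈ inside ends X := by_contra fun h => hx.1.2 (hPQ.right_subset ⟨hx.2, h⟩)
  have hyX : y ∈ meeting ends X := mem_meeting_of_adj_inside hxy.symm hx_inside
  have hyP : y ∉ P := fun h => hy ⟨⟨h, fun hQ => hyPQ ⟨h, hQ⟩⟩, hyX⟩
  exact hPQ.not_adj x hx.1 y ⟨(hPQ.mem_or_mem y).resolve_left hyP, hyP⟩ (by simp [hx.2, hyX, hxy])

theorem exists_isCliqueModel_or_isTight [Finite E] (hK : IsKempe (lineGraphOf ends) c)
    (hr : ∀ k, c (r k) = k) (hv : ∀ k, ∃ e, c e = k ∧ v ∈ ends e) :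
    (∃ B, IsCliqueModel (lineGraphOf ends) r B) ∨
      ∃ X i, v ∈ X ∧ (∀ k, r k ∉ inside ends X) ∧ IsTight ends c X i := by
  have hr_inj : Injective r := LeftInverse.injective hr
  by_cases h : ∀ P Q, IsSeparation (lineGraphOf ends) {e | v ∈ ends e} (Set.range r) P Q →
      (Set.range r).ncard ≤ (P ∩ Q).ncard
  · obtain ⟨F, hF⟩ := exists_isLinkage h
    exact Or.inl ⟨_, hF.isCliqueModel hr_inj⟩
  · push Not at h
    obtain ⟨P, Q, hPQ, hlt⟩ := h
    rw [← Set.image_univ, hr_inj.injOn.ncard_image, Set.ncard_univ] at hlt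
    exact Or.inr (exists_isTight_of_isSeparation hK hr hv hPQ hlt)

end FullVertex

section CompleteGraph

variable {V : Type*} [DecidableEq V] {C : Finset V} {ι : Type*} {T : ι → Sym2 V} {z : V}

/-- The edges of the complete graph on the vertex set `C`. -/
def completeEdges (C : Finset V) : Finset (Sym2 V) := C.offDiag.image Sym2.mk.uncurry

theorem mem_completeEdges {e : Sym2 V} :
    e ∈ completeEdges C ↔ (∀ v ∈ e, v ∈ C) ∧ ¬e.IsDiag := by
  induction e with | _ a b =>
  simp only [completeEdges, Finset.mem_image, Finset.mem_offDiag, Prod.exists, uncurry_apply_pair,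
    Sym2.mem_iff, Sym2.mk_isDiag_iff, forall_eq_or_imp, forall_eq]
  refine ⟨?_, fun ⟨⟨ha, hb⟩, hab⟩ => ⟨a, b, ⟨ha, hb, hab⟩, rfl⟩⟩
  rintro ⟨x, y, ⟨hx, hy, hxy⟩, h⟩
  obtain ⟨rfl, rfl⟩ | ⟨rfl, rfl⟩ := Sym2.eq_iff.1 h
  exacts [⟨⟨hx, hy⟩, hxy⟩, ⟨⟨hy, hx⟩, hxy.symm⟩]

theorem mk_mem_completeEdges {a b : V} : s(a, b) ∈ completeEdges C ↔ a ∈ C ∧ b ∈ C ∧ a ≠ b := by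
  simp only [mem_completeEdges, Sym2.mem_iff, Sym2.mk_isDiag_iff]
  grind

theorem mem_completeEdges_erase {e : Sym2 V} :
    e ∈ completeEdges (C.erase z) ↔ e ∈ completeEdges C ∧ z ∉ e := by
  simp only [mem_completeEdges, Finset.mem_erase]
  grind

theorem exists_mk_eq_of_mem_completeEdges {e : Sym2 V} (he : e ∈ completeEdges C) (hz : z ∈ e) :
    ∃ a ∈ C, a ≠ z ∧ e = s(z, a) := by
  obtain ⟨a, rfl⟩ := Sym2.mem_iff_exists.1 hz
  have := mk_mem_completeEdges.1 he
  exact ⟨a, this.2.1, this.2.2.symm, rfl⟩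

/-- The line graph of the complete graph on `C` has a clique minor rooted at the edges `T i`. -/
def HasCompleteModel (C : Finset V) (T : ι → Sym2 V) : Prop :=
  ∃ B : ι → Set (Sym2 V), IsCliqueModel (lineGraphOf id) T B ∧ ∀ i, B i ⊆ completeEdges C

theorem hasCompleteModel_of_card_le_three (hT : Injective T) (hTC : ∀ i, T i ∈ completeEdges C)
    (hC : C.card ≤ 3) : HasCompleteModel C T :=
  ⟨_, .of_card_le_three hT (fun i => (mem_completeEdges.1 (hTC i)).2) hC
    fun i => (mem_completeEdges.1 (hTC i)).1, fun i => Set.singleton_subset_iff.2 (hTC i)⟩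

/-- The new branch set is the star of `z`, without the edge `d` if that is already in use. -/
theorem hasCompleteModel_of_star {i₀ : ι} {B : {i // i ≠ i₀} → Set (Sym2 V)}
    {d : Sym2 V} (hB : IsCliqueModel (lineGraphOf id) (fun i : {i // i ≠ i₀} => T i) B)
    (hBC : ∀ i, B i ⊆ completeEdges C) (hTC : T i₀ ∈ completeEdges C) (hz : z ∈ T i₀)
    (hd : T i₀ ≠ d) (hBd : ∀ i, ∀ e ∈ B i, z ∈ e → e = d) (hBz : ∀ i, ∃ e ∈ B i, z ∉ e) :
    HasCompleteModel C T := by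
  classical
  let Z : Set (Sym2 V) := {e | e ∈ completeEdges C ∧ z ∈ e ∧ e ≠ d}
  have hdisj (i) : Disjoint Z (B i) :=
    Set.disjoint_left.2 fun e he heB => he.2.2 (hBd i e heB he.2.1)
  have hadj (i) : ∃ a ∈ Z, ∃ b ∈ B i, (lineGraphOf id).Adj a b := by
    obtain ⟨e, he, hze⟩ := hBz i
    have hzC := (mem_completeEdges.1 hTC).1 z hz
    obtain ⟨u, hu, hud⟩ : ∃ u ∈ e, s(z, u) ≠ d := by
      by_contra! h
      have heC := (mem_completeEdges.1 (hBC i he)).2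
      induction e with | _ p q =>
      have hpq := (h p (Sym2.mem_mk_left p q)).trans (h q (Sym2.mem_mk_right p q)).symm
      exact heC (Sym2.mk_isDiag_iff.2 (Sym2.congr_right.1 hpq))
    have huC := (mem_completeEdges.1 (hBC i he)).1 u hu
    have hzu : s(z, u) ∈ Z := ⟨mk_mem_completeEdges.2 ⟨hzC, huC, fun h => hze (h ▸ hu)⟩,
      Sym2.mem_mk_left z u, hud⟩
    exact ⟨s(z, u), hzu, e, he, lineGraphOf_adj.2
      ⟨(hdisj i).ne_of_mem hzu he, u, Sym2.mem_mk_right z u, hu⟩⟩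
  have hZ : T i₀ ∈ Z := ⟨hTC, hz, hd⟩
  refine ⟨_, hB.extend hZ (connected_lineGraphOf_of_forall_mem ⟨_, hZ⟩ fun e he => he.2.1) hdisj
    hadj, fun i => ?_⟩
  split_ifs with h
  · exact fun e he => he.1
  · exact hBC ⟨i, h⟩

theorem hasCompleteModel_of_forall_notMem {i₀ : ι} (hT : ∀ i, T i ∈ completeEdges C)
    (hz₀ : z ∈ T i₀) (hz : ∀ i ≠ i₀, z ∉ T i)
    (ih : (∀ i : {i // i ≠ i₀}, T i ∈ completeEdges (C.erase z)) →
      HasCompleteModel (C.erase z) fun i : {i // i ≠ i₀} => T i) : HasCompleteModel C T := by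
  classical
  obtain ⟨B, hB, hBC⟩ := ih fun i => mem_completeEdges_erase.2 ⟨hT i, hz i i.2⟩
  refine hasCompleteModel_of_star (d := s(z, z)) hB
    (fun i e he => (mem_completeEdges_erase.1 (hBC i he)).1) (hT i₀) hz₀ ?_
    (fun i e he hze => absurd hze (mem_completeEdges_erase.1 (hBC i he)).2)
    fun i => ⟨_, hB.root_mem i, hz i i.2⟩
  exact fun h => (mem_completeEdges.1 (hT i₀)).2 (h ▸ Sym2.mk_isDiag_iff.2 rfl)

theorem injective_update {α β : Type*} [DecidableEq α] {f : α → β} (hf : Injective f) {b : β}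
    (hb : ∀ x, f x ≠ b) {a : α} : Injective (update f a b) := by
  intro x y h
  by_contra hxy
  simp only [update_apply] at h
  split_ifs at h with hx hy hy
  exacts [hxy (hx.trans hy.symm), hb y h.symm, hb x h, hxy (hf h)]

/-- Root the branch set of `i₁` at `n` instead of `T i₁`, and delete `z` and `i₂`. -/
theorem hasCompleteModel_of_exchange {i₁ i₂ : ι} (h₁₂ : i₁ ≠ i₂) (hT : Injective T)
    (hTC : ∀ i, T i ∈ completeEdges C) (hz₁ : z ∈ T i₁) (hz₂ : z ∈ T i₂)
    (hz : ∀ i, i ≠ i₁ → i ≠ i₂ → z ∉ T i) {n : Sym2 V} (hn : n ∈ completeEdges (C.erase z))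
    (hnT : ∀ i, T i ≠ n) {u : V} (hu₁ : u ∈ T i₁) (hun : u ∈ n)
    (ih : ∀ T' : {i // i ≠ i₂} → Sym2 V, Injective T' → (∀ i, T' i ∈ completeEdges (C.erase z)) →
      HasCompleteModel (C.erase z) T') : HasCompleteModel C T := by
  classical
  let j₁ : {i // i ≠ i₂} := ⟨i₁, h₁₂⟩
  let T' : {i // i ≠ i₂} → Sym2 V := update (fun i => T i) j₁ n
  have hT'_self : T' j₁ = n := update_self ..
  have hT'_ne {i} (hi : i ≠ j₁) : T' i = T i := update_of_ne hi ..
  have hT'z (i) : T' i ∈ completeEdges (C.erase z) := by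
    obtain rfl | hi := eq_or_ne i j₁
    · rwa [hT'_self]
    · rw [hT'_ne hi]
      exact mem_completeEdges_erase.2 ⟨hTC i, hz i (fun h => hi (Subtype.ext h)) i.2⟩
  have hT' : Injective T' :=
    injective_update (f := fun i : {i // i ≠ i₂} => T i) (hT.comp Subtype.val_injective)
      fun i => hnT i
  obtain ⟨B, hB, hBC⟩ := ih T' hT' hT'z
  have hB_notMem (i) (e : Sym2 V) (he : e ∈ B i) : z ∉ e := (mem_completeEdges_erase.1 (hBC i he)).2
  have hB' := hB.update_root (i₁ := j₁) (x := T i₁) (fun i h => hB_notMem i _ h hz₁)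
    (hT'_self ▸ hB.root_mem j₁) (lineGraphOf_adj.2 ⟨hnT i₁, u, hu₁, hun⟩)
  have hroot : update T' j₁ (T i₁) = fun i : {i // i ≠ i₂} => T i := by
    simp only [T', update_idem, update_eq_self_iff, j₁]
  rw [hroot] at hB'
  have hmem_update {i e} (he : e ∈ update B j₁ (insert (T i₁) (B j₁)) i) :
      e = T i₁ ∨ e ∈ B i := by
    obtain rfl | hi := eq_or_ne i j₁
    · rwa [update_self] at he
    · exact Or.inr (by rwa [update_of_ne hi] at he)
  refine hasCompleteModel_of_star (d := T i₁) hB' (fun i e he => ?_) (hTC i₂) hz₂ (hT.ne h₁₂.symm)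
    (fun i e he hze => (hmem_update he).resolve_right fun h => hB_notMem i e h hze) fun i => ?_
  · obtain rfl | he := hmem_update he
    · exact hTC i₁
    · exact (mem_completeEdges_erase.1 (hBC i he)).1
  · refine ⟨T' i, ?_, (mem_completeEdges_erase.1 (hT'z i)).2⟩
    obtain rfl | hi := eq_or_ne i j₁
    · exact update_self (f := B) .. ▸ Or.inr (hB.root_mem j₁)
    · exact update_of_ne hi (f := B) .. ▸ hB.root_mem i

end CompleteGraph

section DegreeCount

variable {V : Type*} [DecidableEq V] {C : Finset V} {ι : Type*} {T : ι → Sym2 V} {z : V}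

theorem two_mul_card_sub_three_le_card_filter {D : Finset V} {a b : V} (ha : a ∈ D) (hb : b ∈ D)
    (hab : a ≠ b) :
    2 * D.card - 3 ≤ {n ∈ completeEdges D | a ∈ n ∨ b ∈ n}.card := by
  have hsub : (D.erase a).image (s(a, ·)) ∪ ((D.erase a).erase b).image (s(b, ·)) ⊆
      {n ∈ completeEdges D | a ∈ n ∨ b ∈ n} := by
    intro n hn
    simp only [Finset.mem_union, Finset.mem_image, Finset.mem_erase] at hn
    obtain ⟨x, ⟨hxa, hx⟩, rfl⟩ | ⟨x, ⟨hxb, -, hx⟩, rfl⟩ := hn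
    · exact Finset.mem_filter.2
        ⟨mk_mem_completeEdges.2 ⟨ha, hx, hxa.symm⟩, Or.inl (Sym2.mem_mk_left a x)⟩
    · exact Finset.mem_filter.2
        ⟨mk_mem_completeEdges.2 ⟨hb, hx, hxb.symm⟩, Or.inr (Sym2.mem_mk_left b x)⟩
  have hdisj : Disjoint ((D.erase a).image (s(a, ·))) (((D.erase a).erase b).image (s(b, ·))) := by
    simp only [Finset.disjoint_left, Finset.mem_image, Finset.mem_erase]
    rintro _ ⟨x, -, rfl⟩ ⟨y, ⟨-, hya, -⟩, h⟩
    obtain ⟨hba, -⟩ | ⟨-, hy⟩ := Sym2.eq_iff.1 h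
    exacts [hab hba.symm, hya hy]
  have hinj (c : V) : Injective (s(c, ·)) := fun x y => Sym2.congr_right.1
  have hcard := Finset.card_le_card hsub
  rw [Finset.card_union_of_disjoint hdisj, Finset.card_image_of_injective _ (hinj a),
    Finset.card_image_of_injective _ (hinj b),
    Finset.card_erase_of_mem (Finset.mem_erase.2 ⟨hab.symm, hb⟩), Finset.card_erase_of_mem ha]
    at hcard
  omega

theorem exists_mem_completeEdges_forall_ne [Fintype ι] (hT : Injective T)
    (hcard : Fintype.card ι = C.card) (hC : 4 ≤ C.card) {i₁ i₂ : ι} (h₁₂ : i₁ ≠ i₂) {a b : V}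
    (hz : z ∈ C) (ha : a ∈ C.erase z) (hb : b ∈ C.erase z) (h₁ : T i₁ = s(z, a))
    (h₂ : T i₂ = s(z, b)) :
    ∃ n ∈ completeEdges (C.erase z), (∀ i, T i ≠ n) ∧ (a ∈ n ∨ b ∈ n) := by
  classical
  have hab : a ≠ b := fun h => h₁₂ (hT (h₁.trans (h ▸ h₂.symm)))
  have hlt : (({i₁, i₂} : Finset ι)ᶜ.image T).card <
      {n ∈ completeEdges (C.erase z) | a ∈ n ∨ b ∈ n}.card := by
    refine lt_of_lt_of_le ?_ (two_mul_card_sub_three_le_card_filter ha hb hab)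
    rw [Finset.card_image_of_injective _ hT, Finset.card_compl, Finset.card_pair h₁₂,
      Finset.card_erase_of_mem hz]
    omega
  obtain ⟨n, hn, hnT⟩ := Finset.exists_mem_notMem_of_card_lt_card hlt
  obtain ⟨hnC, hnab⟩ := Finset.mem_filter.1 hn
  have hzn := (mem_completeEdges_erase.1 hnC).2
  refine ⟨n, hnC, fun i hi => ?_, hnab⟩
  obtain rfl | hi₁ := eq_or_ne i i₁
  · exact hzn (hi ▸ h₁ ▸ Sym2.mem_mk_left z a)
  obtain rfl | hi₂ := eq_or_ne i i₂
  · exact hzn (hi ▸ h₂ ▸ Sym2.mem_mk_left z b)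
  exact hnT (Finset.mem_image.2 ⟨i, by simp [hi₁, hi₂], hi⟩)

theorem hasCompleteModel_of_forall_mem_iff [Fintype ι] (hT : Injective T)
    (hTC : ∀ i, T i ∈ completeEdges C) (hcard : Fintype.card ι = C.card) (hC : 4 ≤ C.card)
    {i₁ i₂ : ι} (h₁₂ : i₁ ≠ i₂) (hz : ∀ i, z ∈ T i ↔ i = i₁ ∨ i = i₂)
    (ih : ∀ (i₀ : ι) (T' : {i // i ≠ i₀} → Sym2 V), Injective T' →
      (∀ i, T' i ∈ completeEdges (C.erase z)) → HasCompleteModel (C.erase z) T') :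
    HasCompleteModel C T := by
  have hz₁ : z ∈ T i₁ := (hz i₁).2 (Or.inl rfl)
  have hz₂ : z ∈ T i₂ := (hz i₂).2 (Or.inr rfl)
  obtain ⟨a, ha, haz, h₁⟩ := exists_mk_eq_of_mem_completeEdges (hTC i₁) hz₁
  obtain ⟨b, hb, hbz, h₂⟩ := exists_mk_eq_of_mem_completeEdges (hTC i₂) hz₂
  obtain ⟨n, hn, hnT, han | hbn⟩ := exists_mem_completeEdges_forall_ne hT hcard hC h₁₂
    ((mem_completeEdges.1 (hTC i₁)).1 z hz₁) (Finset.mem_erase.2 ⟨haz, ha⟩)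
    (Finset.mem_erase.2 ⟨hbz, hb⟩) h₁ h₂
  · exact hasCompleteModel_of_exchange h₁₂ hT hTC hz₁ hz₂ (by grind) hn hnT
      (h₁ ▸ Sym2.mem_mk_right z a) han (ih i₂)
  · exact hasCompleteModel_of_exchange h₁₂.symm hT hTC hz₂ hz₁ (by grind) hn hnT
      (h₂ ▸ Sym2.mem_mk_right z b) hbn (ih i₁)

theorem sum_card_filter_mem [Fintype ι] (hTC : ∀ i, T i ∈ completeEdges C) :
    ∑ w ∈ C, Finset.card {i | w ∈ T i} = 2 * Fintype.card ι := by
  have htwo (i : ι) : Finset.card {w ∈ C | w ∈ T i} = 2 := by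
    obtain ⟨hC, hdiag⟩ := mem_completeEdges.1 (hTC i)
    rw [← Sym2.card_toFinset_of_not_isDiag _ hdiag]
    congr 1
    ext w
    simpa using hC w
  calc ∑ w ∈ C, Finset.card {i | w ∈ T i}
      = ∑ i, Finset.card {w ∈ C | w ∈ T i} :=
        Finset.sum_card_bipartiteAbove_eq_sum_card_bipartiteBelow fun w i => w ∈ T i
    _ = 2 * Fintype.card ι := by
        rw [Finset.sum_const_nat fun i _ => htwo i, Finset.card_univ, mul_comm]

theorem exists_pair_forall_notMem [Fintype ι] (hTC : ∀ i, T i ∈ completeEdges C)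
    (hcard : Fintype.card ι = C.card) (hC : 4 ≤ C.card)
    (h : ∀ w ∈ C, Finset.card {i | w ∈ T i} ≠ 1 ∧ Finset.card {i | w ∈ T i} ≠ 2) :
    ∃ z ∈ C, ∃ u ∈ C, z ≠ u ∧ (∀ i, z ∉ T i) ∧ ∀ i, u ∉ T i := by
  have hlt : 1 < Finset.card {w ∈ C | ∀ i, w ∉ T i} := by
    have hsum := sum_card_filter_mem hTC
    have hle : Finset.card {w ∈ C | ¬∀ i, w ∉ T i} * 3 ≤ 2 * Fintype.card ι := by
      rw [← hsum, ← smul_eq_mul]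
      refine (Finset.card_nsmul_le_sum _ _ _ fun w hw => ?_).trans
        (Finset.sum_le_sum_of_subset (Finset.filter_subset _ C))
      obtain ⟨hwC, hw⟩ := Finset.mem_filter.1 hw
      push Not at hw
      obtain ⟨i, hi⟩ := hw
      have hpos : 0 < Finset.card {i | w ∈ T i} :=
        Finset.card_pos.2 ⟨i, Finset.mem_filter.2 ⟨Finset.mem_univ i, hi⟩⟩
      have := h w hwC
      omega
    have := Finset.card_filter_add_card_filter_not (s := C) fun w => ∀ i, w ∉ T i
    omega
  obtain ⟨z, hz, u, hu, hzu⟩ := Finset.one_lt_card.1 hlt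
  rw [Finset.mem_filter] at hz hu
  exact ⟨z, hz.1, u, hu.1, hzu, hz.2, hu.2⟩

theorem card_le_card_biUnion_filter_mem_or [Fintype ι] [DecidableEq ι] {κ : Type*} {w : κ → V}
    (hw : Injective w) (hT : ∀ i, ¬(T i).IsDiag) {s : Finset κ} (hs : s.card ≤ Fintype.card ι)
    (h : ∀ x ∈ s, Finset.card {i | w x ∈ T i} ≠ 1) :
    s.card ≤ (s.biUnion fun x => {i | w x ∈ T i ∨ ∀ j, w x ∉ T j}).card := by
  by_cases hisolated : ∃ x ∈ s, ∀ j, w x ∉ T j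
  · obtain ⟨x, hx, hxT⟩ := hisolated
    refine hs.trans (Finset.card_le_card fun i _ => Finset.mem_biUnion.2 ⟨x, hx, ?_⟩)
    exact Finset.mem_filter.2 ⟨Finset.mem_univ i, Or.inr hxT⟩
  push Not at hisolated
  refine Nat.le_of_mul_le_mul_right (Finset.card_mul_le_card_mul (fun x i => w x ∈ T i)
    (fun x hx => ?_) fun i _ => ?_) two_pos
  · obtain ⟨j, hj⟩ := hisolated x hx
    have hpos : 0 < Finset.card {i | w x ∈ T i} := Finset.card_pos.2 ⟨j, by simpa using hj⟩
    have hne := h x hx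
    refine le_trans (by omega) (Finset.card_le_card (s := {i | w x ∈ T i}) fun i hi => ?_)
    have hi := (Finset.mem_filter.1 hi).2
    exact Finset.mem_filter.2 ⟨Finset.mem_biUnion.2
      ⟨x, hx, Finset.mem_filter.2 ⟨Finset.mem_univ i, Or.inl hi⟩⟩, hi⟩
  · rw [← Sym2.card_toFinset_of_not_isDiag _ (hT i)]
    exact Finset.card_le_card_of_injOn w
      (fun x hx => Sym2.mem_toFinset.2 (Finset.mem_filter.1 hx).2) hw.injOn

/-- Hall's theorem sends each vertex of `D` to an edge, missing one edge `i₀`; invert this. -/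
theorem exists_injective_of_card_filter_ne_one [Fintype ι] {D : Finset V}
    (hT : ∀ i, ¬(T i).IsDiag) (hcard : D.card + 1 = Fintype.card ι)
    (hD : ∀ w ∈ D, Finset.card {i | w ∈ T i} ≠ 1) :
    ∃ (i₀ : ι) (φ : {i // i ≠ i₀} → V), Injective φ ∧
      ∀ i, φ i ∈ D ∧ (φ i ∈ T i ∨ ∀ j, φ i ∉ T j) := by
  classical
  obtain ⟨f, hf, hft⟩ := (Finset.all_card_le_biUnion_card_iff_exists_injective _).1
    fun s : Finset D => card_le_card_biUnion_filter_mem_or Subtype.val_injective hT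
      (s.card_le_univ.trans (by rw [Fintype.card_coe]; omega)) fun w _ => hD w w.2
  obtain ⟨i₀, hi₀⟩ : ∃ i₀, ∀ w, f w ≠ i₀ := by
    by_contra! hsurj
    have := Fintype.card_le_of_surjective f hsurj
    rw [Fintype.card_coe] at this
    omega
  let g (w : D) : {i // i ≠ i₀} := ⟨f w, hi₀ w⟩
  have hg : Bijective g := by
    refine (Fintype.bijective_iff_injective_and_card g).2
      ⟨fun x y h => hf (congrArg Subtype.val h), ?_⟩
    rw [Fintype.card_coe, Fintype.card_subtype_compl, Fintype.card_subtype_eq]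
    omega
  let e := Equiv.ofBijective g hg
  have he (i : {i // i ≠ i₀}) : f (e.symm i) = i := congrArg Subtype.val (e.apply_symm_apply i)
  refine ⟨i₀, fun i => e.symm i, Subtype.val_injective.comp e.symm.injective,
    fun i => ⟨(e.symm i).2, ?_⟩⟩
  have hmem := (Finset.mem_filter.1 (hft (e.symm i))).2
  rwa [he] at hmem

end DegreeCount

section Routing

variable {V : Type*} {ι : Type*} {T : ι → Sym2 V} {z : V}

/-- For each edge `T i`, `i ≠ i₀`, an end `q i` and a further vertex `φ i` through which the edge is
joined to the isolated vertex `z`. -/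
structure IsRouting (T : ι → Sym2 V) (z : V) (i₀ : ι) (q φ : {i // i ≠ i₀} → V) : Prop where
  injective : Injective φ
  mem (i : {i // i ≠ i₀}) : q i ∈ T i
  ne (i) : q i ≠ φ i
  ne_apex (i) : φ i ≠ z
  mem_or (i : {i // i ≠ i₀}) : φ i ∈ T i ∨ ∀ j, φ i ∉ T j
  apex_notMem (i : ι) : z ∉ T i

/-- The branch set joining the edge `e` through its end `q` and the vertex `p` to `z`. -/
def route (e : Sym2 V) (q p z : V) : Set (Sym2 V) := {e, s(q, p), s(p, z)}

namespace IsRouting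

variable {i₀ : ι} {q φ : {i // i ≠ i₀} → V}

theorem mk_eq (h : IsRouting T z i₀ q φ) {i : {i // i ≠ i₀}} {j : ι} (hj : φ i ∈ T j) :
    s(q i, φ i) = T i :=
  ((Sym2.mem_and_mem_iff (h.ne i)).1 ⟨h.mem i, (h.mem_or i).resolve_right fun hi => hi j hj⟩).symm

theorem notMem_route (hT : Injective T) (h : IsRouting T z i₀ q φ) {i : {i // i ≠ i₀}} {j : ι}
    (hij : j ≠ i) : T j ∉ route (T i) (q i) (φ i) z := by
  rintro (hj | hj | hj)
  · exact hij (hT hj)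
  · exact hij (hT (hj.trans (h.mk_eq (hj ▸ Sym2.mem_mk_right (q i) (φ i)))))
  · exact h.apex_notMem j (hj ▸ Sym2.mem_mk_right (φ i) z)

theorem disjoint_route (hT : Injective T) (h : IsRouting T z i₀ q φ) {i j : {i // i ≠ i₀}}
    (hij : i ≠ j) : Disjoint (route (T i) (q i) (φ i) z) (route (T j) (q j) (φ j) z) := by
  have hval (k : {i // i ≠ i₀}) : z ∉ s(q k, φ k) := by
    simp only [Sym2.mem_iff, not_or]
    exact ⟨fun hz => h.apex_notMem k (hz ▸ h.mem k), (h.ne_apex k).symm⟩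
  refine Set.disjoint_left.2 fun e hi hj => ?_
  have hi' := hi
  obtain rfl | rfl | rfl := hi
  · exact h.notMem_route hT (Subtype.coe_ne_coe.2 hij) hj
  · obtain hj | hj | hj := hj
    · exact h.notMem_route hT (Subtype.coe_ne_coe.2 hij.symm) (hj ▸ hi')
    · obtain hφ | ⟨hqφ, hφq⟩ := Sym2.eq_iff.1 hj
      · exact hij (h.injective hφ.2)
      · have hi := h.mk_eq (i := i) (hφq ▸ h.mem j)
        have hj' := h.mk_eq (i := j) (hqφ ▸ h.mem i)
        exact hij (Subtype.ext (hT (hi.symm.trans (hj.trans hj'))))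
    · exact hval i (hj ▸ Sym2.mem_mk_right (φ j) z)
  · obtain hj | hj | hj := hj
    · exact h.apex_notMem j (hj ▸ Sym2.mem_mk_right (φ i) z)
    · exact hval j (hj ▸ Sym2.mem_mk_right (φ i) z)
    · exact hij (h.injective (Sym2.congr_left.1 hj))

theorem isCliqueModel (hT : Injective T) (h : IsRouting T z i₀ q φ) :
    IsCliqueModel (lineGraphOf id) (fun i : {i // i ≠ i₀} => T i)
      fun i => route (T i) (q i) (φ i) z := by
  refine .of_forall_exists_mem (fun i => Or.inl rfl) (fun i => ?_)
    (fun i j hij => h.disjoint_route hT hij) fun i j _ => ?_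
  · exact connected_lineGraphOf_insert (connected_lineGraphOf_insert
      (connected_induce_singleton _ _) rfl (Sym2.mem_mk_right _ _) (Sym2.mem_mk_left _ _))
      (Or.inl rfl) (h.mem i) (Sym2.mem_mk_left (q i) (φ i))
  · exact ⟨_, Or.inr (Or.inr rfl), _, Or.inr (Or.inr rfl), z, Sym2.mem_mk_right _ _,
      Sym2.mem_mk_right _ _⟩

end IsRouting

/-- The edges joining `u` to the ends, other than `x`, of the edges `T j`. -/
def spokes (T : ι → Sym2 V) (u x : V) : Set (Sym2 V) := {e | ∃ j, ∃ w ∈ T j, w ≠ x ∧ e = s(u, w)}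

theorem exists_mk_mem_spokes {i : ι} (hi : ¬(T i).IsDiag) (u x : V) :
    ∃ w ∈ T i, s(u, w) ∈ spokes T u x := by
  obtain ⟨w, hw, hwx⟩ := exists_mem_ne_of_not_isDiag hi x
  exact ⟨w, hw, i, w, hw, hwx, rfl⟩

theorem connected_insert_spokes {i : ι} (hi : ¬(T i).IsDiag) (u x : V) :
    ((lineGraphOf id).induce (insert (T i) (spokes T u x))).Connected := by
  obtain ⟨w, hw, hwS⟩ := exists_mk_mem_spokes hi u x
  have hstar : ∀ e ∈ spokes T u x, u ∈ e := by
    rintro _ ⟨_, w, -, -, rfl⟩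
    exact Sym2.mem_mk_left u w
  exact connected_lineGraphOf_insert (connected_lineGraphOf_of_forall_mem ⟨_, hwS⟩ hstar) hwS hw
    (Sym2.mem_mk_right u w)

namespace IsRouting

variable {i₀ : ι} {q φ : {i // i ≠ i₀} → V}

theorem exists_forall_disjoint_spokes (h : IsRouting T z i₀ q φ) {u : V} (hzu : z ≠ u)
    (hu : ∀ i, u ∉ T i) :
    ∃ x, ∀ i : {i // i ≠ i₀}, Disjoint (spokes T u x) (route (T i) (q i) (φ i) z) := by
  obtain ⟨x, hx⟩ : ∃ x, ∀ i, φ i = u → q i = x := by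
    by_cases hφu : ∃ i, φ i = u
    · obtain ⟨i, rfl⟩ := hφu
      exact ⟨q i, fun j hj => congrArg q (h.injective hj)⟩
    · exact ⟨u, fun i hi => absurd ⟨i, hi⟩ hφu⟩
  refine ⟨x, fun i => Set.disjoint_left.2 ?_⟩
  rintro _ ⟨j, w, hw, hwx, rfl⟩ (he | he | he)
  · exact hu i (he ▸ Sym2.mem_mk_left u w)
  · obtain ⟨huq, -⟩ | ⟨hφ, hq⟩ := Sym2.eq_iff.1 he
    · exact hu i (huq ▸ h.mem i)
    · exact hwx (hq.trans (hx i hφ.symm))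
  · obtain ⟨-, hwz⟩ | ⟨huz, -⟩ := Sym2.eq_iff.1 he
    · exact h.apex_notMem j (hwz ▸ hw)
    · exact hzu huz.symm

/-- The missing branch set joins `T i₀` to the remaining edges by spokes from the isolated vertex
`u`; at most one edge `s(u, x)` at `u` lies on a route, and every edge has an end other than `x`. -/
theorem hasCompleteModel [DecidableEq V] {C : Finset V} (hT : Injective T)
    (hTC : ∀ i, T i ∈ completeEdges C) (h : IsRouting T z i₀ q φ) (hφC : ∀ i, φ i ∈ C)
    (hzC : z ∈ C) {u : V} (huC : u ∈ C) (hzu : z ≠ u) (hu : ∀ i, u ∉ T i) :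
    HasCompleteModel C T := by
  classical
  have hdiag (i) : ¬(T i).IsDiag := (mem_completeEdges.1 (hTC i)).2
  have hmem {i w} (hw : w ∈ T i) : w ∈ C := (mem_completeEdges.1 (hTC i)).1 w hw
  obtain ⟨x, hx⟩ := h.exists_forall_disjoint_spokes hzu hu
  have hdisj (i : {i // i ≠ i₀}) :
      Disjoint (insert (T i₀) (spokes T u x)) (route (T i) (q i) (φ i) z) :=
    Set.disjoint_insert_left.2 ⟨h.notMem_route hT i.2.symm, hx i⟩
  refine ⟨_, (h.isCliqueModel hT).extend (Set.mem_insert _ _)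
    (connected_insert_spokes (hdiag i₀) u x) hdisj fun i => ?_, fun i => ?_⟩
  · obtain ⟨w, hw, hwS⟩ := exists_mk_mem_spokes (hdiag i) u x
    exact ⟨s(u, w), Or.inr hwS, T i, Or.inl rfl, lineGraphOf_adj.2
      ⟨(hdisj i).ne_of_mem (Or.inr hwS) (Or.inl rfl), w, Sym2.mem_mk_right u w, hw⟩⟩
  · split_ifs with hi
    · rintro _ (rfl | ⟨j, w, hw, -, rfl⟩)
      · exact hTC i₀
      · exact mk_mem_completeEdges.2 ⟨huC, hmem hw, fun huw => hu j (huw ▸ hw)⟩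
    · rintro _ (rfl | rfl | rfl)
      · exact hTC i
      · exact mk_mem_completeEdges.2 ⟨hmem (h.mem _), hφC _, h.ne _⟩
      · exact mk_mem_completeEdges.2 ⟨hφC _, hzC, h.ne_apex _⟩

end IsRouting

variable [DecidableEq V] {C : Finset V}

theorem hasCompleteModel_of_forall_card_filter_ne [Fintype ι] (hT : Injective T)
    (hTC : ∀ i, T i ∈ completeEdges C) (hcard : Fintype.card ι = C.card) (hC : 4 ≤ C.card)
    (h : ∀ w ∈ C, Finset.card {i | w ∈ T i} ≠ 1 ∧ Finset.card {i | w ∈ T i} ≠ 2) :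
    HasCompleteModel C T := by
  have hdiag (i) := (mem_completeEdges.1 (hTC i)).2
  obtain ⟨z, hz, u, hu, hzu, hzT, huT⟩ := exists_pair_forall_notMem hTC hcard hC h
  obtain ⟨i₀, φ, hφ, hφT⟩ := exists_injective_of_card_filter_ne_one (D := C.erase z) hdiag
    (by rw [Finset.card_erase_add_one hz, hcard]) fun w hw =>
      (h w (Finset.mem_of_mem_erase hw)).1
  choose q hqT hqφ using fun i : {i // i ≠ i₀} => exists_mem_ne_of_not_isDiag (hdiag i) (φ i)
  have hrouting : IsRouting T z i₀ q φ :=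
    ⟨hφ, hqT, hqφ, fun i => Finset.ne_of_mem_erase (hφT i).1, fun i => (hφT i).2, hzT⟩
  exact hrouting.hasCompleteModel hT hTC (fun i => Finset.mem_of_mem_erase (hφT i).1) hz hu hzu huT

theorem hasCompleteModel {ι : Type u} [Fintype ι] {T : ι → Sym2 V} (hT : Injective T)
    (hTC : ∀ i, T i ∈ completeEdges C) (hcard : Fintype.card ι = C.card) :
    HasCompleteModel C T := by
  classical
  induction C using Finset.strongInduction generalizing ι with | H C ih =>
  obtain hC | hC := le_or_gt C.card 3
  · exact hasCompleteModel_of_card_le_three hT hTC hC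
  have ih_erase {z : V} {i : ι} (hz : z ∈ T i) (i₀ : ι) (T' : {i // i ≠ i₀} → Sym2 V)
      (hT' : Injective T') (hT'C : ∀ i, T' i ∈ completeEdges (C.erase z)) :
      HasCompleteModel (C.erase z) T' := by
    have hzC := (mem_completeEdges.1 (hTC i)).1 z hz
    refine ih _ (Finset.erase_ssubset hzC) hT' hT'C ?_
    rw [Fintype.card_subtype_compl, Fintype.card_subtype_eq, Finset.card_erase_of_mem hzC, hcard]
  by_cases h : ∀ w ∈ C, Finset.card {i | w ∈ T i} ≠ 1 ∧ Finset.card {i | w ∈ T i} ≠ 2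
  · exact hasCompleteModel_of_forall_card_filter_ne hT hTC hcard hC h
  push Not at h
  obtain ⟨z, -, hz⟩ := h
  by_cases h₁ : Finset.card {i | z ∈ T i} = 1
  · obtain ⟨i₀, hi₀⟩ := Finset.card_eq_one.1 h₁
    simp only [Finset.ext_iff, Finset.mem_filter_univ, Finset.mem_singleton] at hi₀
    have hz₀ := (hi₀ i₀).2 rfl
    exact hasCompleteModel_of_forall_notMem hTC hz₀ (fun i hi => mt (hi₀ i).1 hi)
      (ih_erase hz₀ i₀ _ (hT.comp Subtype.val_injective))
  · obtain ⟨i₁, i₂, h₁₂, hi⟩ := Finset.card_eq_two.1 (hz h₁)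
    simp only [Finset.ext_iff, Finset.mem_filter_univ, Finset.mem_insert,
      Finset.mem_singleton] at hi
    exact hasCompleteModel_of_forall_mem_iff hT hTC hcard hC h₁₂ hi
      (ih_erase ((hi i₁).2 (Or.inl rfl)))

end Routing

section SetFamily

variable {V K : Type*}

theorem exists_eq_pair_of_card_eq_two [DecidableEq V] {S : Finset V} {p : V} (hS : S.card = 2)
    (hp : p ∈ S) : ∃ x, p ≠ x ∧ S = {p, x} := by
  obtain ⟨y, z, hyz, rfl⟩ := Finset.card_eq_two.1 hS
  obtain rfl | rfl : p = y ∨ p = z := by simpa using hp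
  · exact ⟨z, hyz, rfl⟩
  · exact ⟨y, hyz.symm, Finset.pair_comm _ _⟩

theorem exists_forall_mem_or_exists_forall_subset {S : K → Finset V}
    (hcard : ∀ i, (S i).card = 2 ∨ S i = ∅)
    (hS : ∀ i j, (S i).Nonempty → (S j).Nonempty → ¬Disjoint (S i) (S j)) :
    (∃ p, ∀ i, S i = ∅ ∨ p ∈ S i) ∨ ∃ D : Finset V, D.card ≤ 3 ∧ ∀ i, S i ⊆ D := by
  classical
  by_cases hne : ∃ i, (S i).card = 2
  · obtain ⟨i, hi⟩ := hne
    obtain ⟨a, b, hab, hi⟩ := Finset.card_eq_two.1 hi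
    refine or_iff_not_imp_left.2 fun hstar => ?_
    push Not at hstar
    obtain ⟨j, hj, haj⟩ := hstar a
    obtain ⟨k, hk, hbk⟩ := hstar b
    have hpair {l p} (hl : (S l).Nonempty) (hp : p ∈ S l) : ∃ x, S l = {p, x} :=
      let ⟨x, _, hx⟩ := exists_eq_pair_of_card_eq_two ((hcard l).resolve_right hl.ne_empty) hp
      ⟨x, hx⟩
    have hmeet (l m) (hl : (S l).Nonempty) (hm : (S m).Nonempty) : ∃ u ∈ S l, u ∈ S m :=
      Finset.not_disjoint_iff.1 (hS l m hl hm)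
    have hS_ne : (S i).Nonempty := by simp [hi]
    obtain ⟨c, hj'⟩ : ∃ c, S j = {b, c} := hpair hj (by grind [hmeet i j hS_ne hj])
    obtain ⟨d, hk'⟩ : ∃ d, S k = {a, d} := hpair hk (by grind [hmeet i k hS_ne hk])
    obtain rfl : c = d := by grind [hmeet j k hj hk]
    refine ⟨{a, b, c}, Finset.card_le_three, fun l => ?_⟩
    obtain hl | hl := (S l).eq_empty_or_nonempty
    · simp [hl]
    · grind [hmeet i l hS_ne hl, hmeet j l hj hl, hmeet k l hk hl]
  · push Not at hne
    exact Or.inr ⟨∅, by simp, fun i => ((hcard i).resolve_left (hne i)).le⟩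

theorem exists_eq_symmDiff_singleton_or [DecidableEq V] [Nonempty K] {U : K → Finset V}
    (hU : ∀ i j, (U i ∆ U j).card = 2 ∨ U i ∆ U j = ∅) :
    (∃ (C : Finset V) (x : K → V), ∀ i, U i = C ∆ {x i}) ∨
      ∃ D : Finset V, D.card ≤ 3 ∧ ∀ i j, U i ∆ U j ⊆ D := by
  obtain ⟨i₀⟩ := ‹Nonempty K›
  have hSS (i j) : (U i₀ ∆ U i) ∆ (U i₀ ∆ U j) = U i ∆ U j := by
    rw [symmDiff_symmDiff_symmDiff_comm, symmDiff_self, bot_symmDiff]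
  have hmeet (i j) (hi : (U i₀ ∆ U i).Nonempty) (hj : (U i₀ ∆ U j).Nonempty) :
      ¬Disjoint (U i₀ ∆ U i) (U i₀ ∆ U j) := by
    intro hdisj
    have hsup := hSS i j
    rw [hdisj.symmDiff_eq_sup] at hsup
    have hcard : (U i ∆ U j).card = 4 := by
      rw [← hsup, Finset.sup_eq_union, Finset.card_union_of_disjoint hdisj,
        (hU i₀ i).resolve_right hi.ne_empty, (hU i₀ j).resolve_right hj.ne_empty]
    obtain h | h := hU i j
    · omega
    · simp [h] at hcard
  obtain ⟨p, hp⟩ | ⟨D, hD, hSD⟩ := exists_forall_mem_or_exists_forall_subset (hU i₀) hmeet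
  · have hx (i) : ∃ x, (U i₀ ∆ U i) = {p} ∆ {x} := by
      obtain h | h := hp i
      · exact ⟨p, by simp [h]⟩
      · have h₂ := (hU i₀ i).resolve_right (Finset.ne_empty_of_mem h)
        obtain ⟨x, hpx, hx⟩ := exists_eq_pair_of_card_eq_two h₂ h
        exact ⟨x, by rw [hx, (Finset.disjoint_singleton.2 hpx).symmDiff_eq_sup]; rfl⟩
    choose x hx using hx
    refine Or.inl ⟨U i₀ ∆ {p}, x, fun i => ?_⟩
    rw [symmDiff_assoc, ← hx, symmDiff_symmDiff_cancel_left]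
  · refine Or.inr ⟨D, hD, fun i j => ?_⟩
    rw [← hSS]
    exact symmDiff_le_sup.trans (sup_le (hSD i) (hSD j))

end SetFamily

section ColorCover

variable {V E K : Type*} [DecidableEq V] {ends : E → Sym2 V} {v : V}

/-- The set of ends of the edges in `F`. -/
def cover (ends : E → Sym2 V) (F : Finset E) : Finset V := F.biUnion fun e => (ends e).toFinset

theorem mem_cover {F : Finset E} : v ∈ cover ends F ↔ ∃ e ∈ F, v ∈ ends e := by
  simp only [cover, Finset.mem_biUnion, Sym2.mem_toFinset]

theorem card_cover_singleton_le (e : E) : (cover ends {e}).card ≤ 2 := by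
  rw [cover, Finset.singleton_biUnion, Sym2.card_toFinset]
  split_ifs <;> simp

theorem card_cover_insert_le [DecidableEq E] {F : Finset E} {e f : E} (he : e ∈ F)
    (hef : (lineGraphOf ends).Adj e f) :
    (cover ends (insert f F)).card ≤ (cover ends F).card + 1 := by
  obtain ⟨-, v, hve, hvf⟩ := lineGraphOf_adj.1 hef
  obtain ⟨w, hw⟩ := Sym2.mem_iff_exists.1 hvf
  refine (Finset.card_le_card (t := insert w (cover ends F)) fun u hu => ?_).trans
    (Finset.card_insert_le _ _)
  simp only [mem_cover, Finset.mem_insert] at hu ⊢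
  obtain ⟨g, rfl | hg, hug⟩ := hu
  · obtain rfl | rfl := Sym2.mem_iff.1 (hw ▸ hug)
    exacts [Or.inr ⟨e, he, hve⟩, Or.inl rfl]
  · exact Or.inr ⟨g, hg, hug⟩

theorem card_cover_le_card_add_one {F : Finset E}
    (hF : ((lineGraphOf ends).induce (F : Set E)).Connected) :
    (cover ends F).card ≤ F.card + 1 := by
  classical
  obtain ⟨e₀, he₀⟩ : F.Nonempty := (connected_induce_iff_forall_exists_adj.1 hF).1
  obtain ⟨S, hS, hmax⟩ := Finset.exists_max_image
    (F.powerset.filter fun S => e₀ ∈ S ∧ (cover ends S).card ≤ S.card + 1) Finset.card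
    ⟨{e₀}, by simpa [he₀] using card_cover_singleton_le e₀⟩
  simp only [Finset.mem_filter, Finset.mem_powerset] at hS hmax
  obtain ⟨hSF, heS, hcard⟩ := hS
  obtain rfl | hne := eq_or_ne S F
  · exact hcard
  obtain ⟨f₀, hf₀, hf₀S⟩ := Finset.exists_of_ssubset (hSF.ssubset_of_ne hne)
  obtain ⟨e, ⟨-, he⟩, f, ⟨hf, hfS⟩, hef⟩ := exists_adj_of_connected_induce hF (Z := S)
    ⟨he₀, heS⟩ ⟨hf₀, hf₀S⟩
  have hle := hmax (insert f S) ⟨Finset.insert_subset hf hSF, Finset.mem_insert_of_mem heS, by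
    rw [Finset.card_insert_of_notMem hfS]
    have := card_cover_insert_le he hef
    omega⟩
  rw [Finset.card_insert_of_notMem hfS] at hle
  omega

variable [Fintype E] [DecidableEq K] {c : E → K} {i j : K}

/-- The set of vertices at which the color `i` is present. -/
def colorCover (ends : E → Sym2 V) (c : E → K) (i : K) : Finset V := cover ends {e | c e = i}

theorem mem_colorCover : v ∈ colorCover ends c i ↔ ∃ e, c e = i ∧ v ∈ ends e := by
  simp only [colorCover, mem_cover, Finset.mem_filter_univ]

theorem card_colorCover (hloop : ∀ e, ¬(ends e).IsDiag) (hK : IsKempe (lineGraphOf ends) c) :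
    (colorCover ends c i).card = 2 * Finset.card {e | c e = i} := by
  have hdisj : (({e | c e = i} : Finset E) : Set E).PairwiseDisjoint fun e =>
      (ends e).toFinset := by
    refine fun e he f hf hef => Finset.disjoint_left.2 fun v hv hv' => ?_
    rw [Finset.mem_coe, Finset.mem_filter_univ] at he hf
    rw [Sym2.mem_toFinset] at hv hv'
    exact hK.ne_of_adj (lineGraphOf_adj.2 ⟨hef, v, hv, hv'⟩) (he.trans hf.symm)
  rw [colorCover, cover, Finset.card_biUnion hdisj,
    Finset.sum_const_nat fun e _ => Sym2.card_toFinset_of_not_isDiag _ (hloop e), mul_comm]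

theorem card_symmDiff_colorCover (hloop : ∀ e, ¬(ends e).IsDiag)
    (hK : IsKempe (lineGraphOf ends) c) (i j : K) :
    (colorCover ends c i ∆ colorCover ends c j).card = 2 ∨
      colorCover ends c i ∆ colorCover ends c j = ∅ := by
  classical
  obtain rfl | hij := eq_or_ne i j
  · simp
  have hunion : (colorCover ends c i ∪ colorCover ends c j).card ≤
      Finset.card {e | c e = i} + Finset.card {e | c e = j} + 1 := by
    have hconn : ((lineGraphOf ends).induce
        (({e | c e = i ∨ c e = j} : Finset E) : Set E)).Connected := by
      rw [Finset.coe_filter_univ]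
      exact hK.connected hij
    have hle := card_cover_le_card_add_one hconn
    rwa [Finset.filter_or, Finset.card_union_of_disjoint (Finset.disjoint_filter.2 fun e _ he hej =>
      hij (he.symm.trans hej)), cover, Finset.union_biUnion] at hle
  have hi := card_colorCover (i := i) hloop hK
  have hj := card_colorCover (i := j) hloop hK
  have h₁ := Finset.card_union_add_card_inter (colorCover ends c i) (colorCover ends c j)
  have h₂ : (colorCover ends c i ∆ colorCover ends c j).card +
      (colorCover ends c i ∩ colorCover ends c j).card =
        (colorCover ends c i ∪ colorCover ends c j).card := by
    rw [← Finset.card_union_of_disjoint (disjoint_symmDiff_inf _ _)]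
    exact congrArg _ (symmDiff_sup_inf _ _)
  rw [← Finset.card_eq_zero]
  omega

end ColorCover

section NoFullVertex

theorem IsKempe.exists_adj_of_ne {α K : Type*} {G : SimpleGraph α} {c : α → K} (h : IsKempe G c)
    {a b : α} (hab : c a ≠ c b) : ∃ b', c b' = c b ∧ G.Adj a b' := by
  obtain ⟨x, rfl, y, -, hxy, hcol⟩ := h.exists_adj hab (Z := {a}) (Or.inl rfl) rfl (Or.inr rfl)
    fun h => hab (congrArg c h.symm)
  exact ⟨y, (hcol.resolve_right fun h => hab h.1).2, hxy⟩

theorem IsKempe.injective_ends {V E K : Type*} {ends : E → Sym2 V} {c : E → K}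
    (hK : IsKempe (lineGraphOf ends) c) (hc : ∀ e, ∃ g ≠ e, c g = c e) : Injective ends := by
  intro e f hef
  by_contra hne
  have hcol : c e ≠ c f := hK.ne_of_adj
    (lineGraphOf_adj.2 ⟨hne, _, (ends e).out_fst_mem, hef ▸ (ends e).out_fst_mem⟩)
  obtain ⟨g, hge, hg⟩ := hc e
  obtain ⟨x, hx, y, hy, hxy, hcol'⟩ := hK.exists_adj hcol (Z := {e, f}) (Or.inl rfl) (Or.inl rfl)
    (Or.inl hg) (by rintro (rfl | rfl); exacts [hge rfl, hcol hg.symm])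
  obtain ⟨-, v, hvx, hvy⟩ := lineGraphOf_adj.1 hxy
  have hx_ends : ends x = ends e := by obtain rfl | rfl := hx; exacts [rfl, hef.symm]
  have hye : c e ≠ c y := hK.ne_of_adj
    (lineGraphOf_adj.2 ⟨fun h => hy (Or.inl h.symm), v, hx_ends ▸ hvx, hvy⟩)
  have hyf : c f ≠ c y := hK.ne_of_adj
    (lineGraphOf_adj.2 ⟨fun h => hy (Or.inr h.symm), v, hef ▸ hx_ends ▸ hvx, hvy⟩)
  exact hcol'.elim (fun h => hyf h.2.symm) fun h => hye h.2.symm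

theorem exists_isCliqueModel_of_subset_range {V E ι : Type*} {ends : E → Sym2 V} {r : ι → E}
    {B : ι → Set (Sym2 V)} (hB : IsCliqueModel (lineGraphOf id) (fun i => ends (r i)) B)
    (hsub : ∀ i, B i ⊆ Set.range ends) : ∃ B', IsCliqueModel (lineGraphOf ends) r B' := by
  refine ⟨_, hB.lift hsub (Φ := fun p => ends ⁻¹' {p}) ?_ ?_ ?_ fun i => rfl⟩
  · rintro _ ⟨e, rfl⟩
    exact connected_lineGraphOf_of_forall_mem (v := (ends e).out.1) ⟨e, rfl⟩ fun f hf =>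
      (show ends f = ends e from hf) ▸ (ends e).out_fst_mem
  · exact fun p _ q _ hpq => (Set.disjoint_singleton.2 hpq).preimage ends
  · rintro _ ⟨e, rfl⟩ _ ⟨f, rfl⟩ hef
    obtain ⟨hne, h⟩ := lineGraphOf_adj.1 hef
    exact ⟨e, rfl, f, rfl, lineGraphOf_adj.2 ⟨ne_of_apply_ne ends hne, h⟩⟩

variable {V E : Type*} {K : Type u} [DecidableEq V] [DecidableEq K] [Fintype E]
  {ends : E → Sym2 V} {c : E → K} {C : Finset V} {x : K → V}

theorem mem_of_colorCover_eq_symmDiff (hloop : ∀ e, ¬(ends e).IsDiag)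
    (hK : IsKempe (lineGraphOf ends) c) (hc : Surjective c)
    (hx : ∀ i, colorCover ends c i = C ∆ {x i}) (hCx : ∀ y ∈ C, ∃ i, x i = y) (i : K) :
    x i ∈ C := by
  by_contra hxi
  obtain ⟨e, rfl, he⟩ : ∃ e, c e = i ∧ x i ∈ ends e := by
    simp [← mem_colorCover, hx, Finset.mem_symmDiff, hxi]
  obtain ⟨y, hy, hyx⟩ := exists_mem_ne_of_not_isDiag (hloop e) (x (c e))
  have hyC : y ∈ C := by
    have : y ∈ colorCover ends c (c e) := mem_colorCover.2 ⟨e, rfl, hy⟩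
    simpa [hx, Finset.mem_symmDiff, hyx] using this
  -- The color missing at `y` is missing at both ends of `e`, so its edges are not adjacent to `e`.
  obtain ⟨k, rfl⟩ := hCx y hyC
  obtain ⟨f, rfl⟩ := hc k
  obtain ⟨g, hg, heg⟩ := hK.exists_adj_of_ne (a := e) (b := f) (by grind)
  obtain ⟨-, v, hve, hvg⟩ := lineGraphOf_adj.1 heg
  have hv : v ∈ colorCover ends c (c f) := mem_colorCover.2 ⟨g, hg, hvg⟩
  have hends : ends e = s(x (c e), x (c f)) := (Sym2.mem_and_mem_iff hyx.symm).1 ⟨he, hy⟩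
  obtain rfl | rfl := Sym2.mem_iff.1 (hends ▸ hve)
  · simp_all [Finset.mem_symmDiff]
  · simp_all [Finset.mem_symmDiff]

theorem card_eq_and_image_ends_eq [Fintype K] (hloop : ∀ e, ¬(ends e).IsDiag)
    (hK : IsKempe (lineGraphOf ends) c) (hends : Injective ends) (hC : 1 < C.card)
    (hx : ∀ i, colorCover ends c i = C.erase (x i)) (hxC : ∀ i, x i ∈ C)
    (hCx : ∀ y ∈ C, ∃ i, x i = y) :
    Fintype.card K = C.card ∧ Finset.univ.image ends = completeEdges C := by
  have hsub : Finset.univ.image ends ⊆ completeEdges C := by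
    refine Finset.image_subset_iff.2 fun e _ => mem_completeEdges.2 ⟨fun v hv => ?_, hloop e⟩
    have : v ∈ colorCover ends c (c e) := mem_colorCover.2 ⟨e, rfl, hv⟩
    exact Finset.mem_of_mem_erase (hx _ ▸ this)
  have hle : C.card ≤ Fintype.card K :=
    (Finset.card_le_card fun y hy => by simpa using hCx y hy).trans Finset.card_image_le
  have hE : 2 * (Finset.univ.image ends).card = Fintype.card K * (C.card - 1) := by
    rw [Finset.card_image_of_injective _ hends,
      Finset.card_eq_sum_card_fiberwise (f := c) (t := Finset.univ) (by simp), Finset.mul_sum]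
    refine Finset.sum_const_nat fun i _ => ?_
    rw [← card_colorCover hloop hK, hx, Finset.card_erase_of_mem (hxC i)]
  have hcomplete : 2 * (completeEdges C).card = C.card * (C.card - 1) := by
    rw [completeEdges, Sym2.two_mul_card_image_offDiag, Finset.offDiag_card, Nat.mul_sub_one]
  have hcard : Fintype.card K = C.card := by
    refine hle.antisymm' (Nat.le_of_mul_le_mul_right (c := C.card - 1) ?_ (by omega))
    rw [← hE, ← hcomplete]
    exact Nat.mul_le_mul_left 2 (Finset.card_le_card hsub)
  refine ⟨hcard, Finset.eq_of_subset_of_card_le hsub ?_⟩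
  rw [hcard, ← hcomplete] at hE
  omega

theorem exists_isCliqueModel_of_colorCover_eq_symmDiff (hloop : ∀ e, ¬(ends e).IsDiag)
    (hK : IsKempe (lineGraphOf ends) c) {r : K → E} (hr : ∀ k, c (r k) = k)
    (hx : ∀ i, colorCover ends c i = C ∆ {x i}) (hv : ∀ v, ∃ k, v ∉ colorCover ends c k) :
    ∃ B, IsCliqueModel (lineGraphOf ends) r B := by
  have hr_inj : Injective r := LeftInverse.injective hr
  have hc : Surjective c := RightInverse.surjective hr
  have : Fintype K := Fintype.ofSurjective c hc
  have hCx (y) (hy : y ∈ C) : ∃ i, x i = y := by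
    obtain ⟨k, hk⟩ := hv y
    rw [hx, Finset.mem_symmDiff] at hk
    exact ⟨k, by_contra fun h => hk (Or.inl ⟨hy, by simpa using Ne.symm h⟩)⟩
  have hxC := mem_of_colorCover_eq_symmDiff hloop hK hc hx hCx
  have hx_erase (i) : colorCover ends c i = C.erase (x i) := by
    rw [hx, symmDiff_of_ge (Finset.singleton_subset_iff.2 (hxC i)), Finset.sdiff_singleton_eq_erase]
  have hr_C (i) {v : V} (hv : v ∈ ends (r i)) : v ∈ C :=
    Finset.mem_of_mem_erase (hx_erase i ▸ mem_colorCover.2 ⟨r i, hr i, hv⟩)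
  obtain hC | hC := le_or_gt C.card 3
  · exact ⟨_, .of_card_le_three hr_inj (fun i => hloop (r i)) hC fun i v => hr_C i⟩
  have hends : Injective ends := hK.injective_ends fun e => by
    have hcard := card_colorCover (i := c e) hloop hK
    rw [hx_erase, Finset.card_erase_of_mem (hxC _)] at hcard
    obtain ⟨g, hg, hge⟩ := Finset.exists_mem_ne (s := {g | c g = c e}) (by omega) e
    exact ⟨g, hge, by simpa using hg⟩
  obtain ⟨hcard, himage⟩ :=
    card_eq_and_image_ends_eq hloop hK hends (by omega) hx_erase hxC hCx
  obtain ⟨B, hB, hBC⟩ := hasCompleteModel (C := C) (hends.comp hr_inj)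
    (fun i => mem_completeEdges.2 ⟨fun v => hr_C i, hloop (r i)⟩) hcard
  refine exists_isCliqueModel_of_subset_range hB fun i => (hBC i).trans ?_
  rw [← himage, Finset.coe_image, Finset.coe_univ, Set.image_univ]

theorem exists_isCliqueModel_of_forall_exists_notMem (hloop : ∀ e, ¬(ends e).IsDiag)
    (hK : IsKempe (lineGraphOf ends) c) {r : K → E} (hr : ∀ k, c (r k) = k)
    (hv : ∀ v, ∃ k, v ∉ colorCover ends c k) : ∃ B, IsCliqueModel (lineGraphOf ends) r B := by
  have hr_inj : Injective r := LeftInverse.injective hr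
  obtain hempty | hne := isEmpty_or_nonempty K
  · exact ⟨_, .of_pairwise_adj fun i => hempty.elim i⟩
  obtain ⟨C, x, hx⟩ | ⟨D, hD, hUD⟩ :=
    exists_eq_symmDiff_singleton_or (card_symmDiff_colorCover hloop hK)
  · exact exists_isCliqueModel_of_colorCover_eq_symmDiff hloop hK hr hx hv
  · refine ⟨_, .of_card_le_three hr_inj (fun i => hloop (r i)) hD fun i v hvi => ?_⟩
    obtain ⟨k, hk⟩ := hv v
    exact hUD i k (Finset.mem_symmDiff.2 (Or.inl ⟨mem_colorCover.2 ⟨r i, hr i, hvi⟩, hk⟩))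

end NoFullVertex

section Main

theorem IsKempe.exists_isCliqueModel {V E : Type*} {K : Type u} [Finite E] {ends : E → Sym2 V}
    (hloop : ∀ e, ¬(ends e).IsDiag) {c : E → K} (hK : IsKempe (lineGraphOf ends) c) {r : K → E}
    (hr : ∀ k, c (r k) = k) : ∃ B, IsCliqueModel (lineGraphOf ends) r B := by
  classical
  induction hn : Nat.card E using Nat.strong_induction_on generalizing E with | _ n ih =>
  by_cases hfull : ∃ v, ∀ k, ∃ e, c e = k ∧ v ∈ ends e
  · obtain ⟨v, hv⟩ := hfull
    obtain hB | ⟨X, i, hvX, hrX, hX⟩ := exists_isCliqueModel_or_isTight hK hr hv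
    · exact hB
    have hlt : Nat.card {e // e ∉ inside ends X} < n := by
      obtain ⟨e, he⟩ := hX.inside_nonempty
      exact hn ▸ Finite.card_subtype_lt (not_not.2 he)
    obtain ⟨B, hB⟩ := ih _ hlt (not_isDiag_contractEnds hvX hloop)
      (hK.contract hvX hX.bijOn.injOn fun k => ⟨r k, hrX k, hr k⟩) (r := fun k => ⟨r k, hrX k⟩)
      hr rfl
    obtain ⟨F, hF⟩ := hX.exists_isLinkage hK hv hvX
    exact hB.of_contractEnds hvX hF
  · have := Fintype.ofFinite E
    push Not at hfull
    exact exists_isCliqueModel_of_forall_exists_notMem hloop hK hr fun v =>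
      (hfull v).imp fun k hk hv => (mem_colorCover.1 hv).elim fun e he => hk e he.1 he.2

variable {α : Type*} {G : SimpleGraph α}

theorem exists_isKempe_of_kempeColoring {𝔠 : Set (Set α)} (h : KempeColoring G 𝔠) :
    ∃ c : α → 𝔠, IsKempe G c ∧ ∀ a (k : 𝔠), a ∈ (k : Set α) ↔ c a = k := by
  obtain ⟨-, hcover, hdisj, hind, hconn⟩ := h
  have hmem (a : α) : ∃ k : 𝔠, a ∈ (k : Set α) := by
    obtain ⟨C, hC, ha⟩ := Set.sUnion_eq_univ_iff.1 hcover a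
    exact ⟨⟨C, hC⟩, ha⟩
  choose c hc using hmem
  have hmem_iff (a) (k : 𝔠) : a ∈ (k : Set α) ↔ c a = k := by
    refine ⟨fun ha => by_contra fun hne => ?_, fun hk => hk ▸ hc a⟩
    exact Set.disjoint_left.1 (hdisj _ (c a).2 _ k.2 (Subtype.coe_ne_coe.2 hne)) (hc a) ha
  refine ⟨c, ⟨fun {a b} hab hcab => ?_, fun {k l} hkl => ?_⟩, hmem_iff⟩
  · exact hind _ (c b).2 a ((hmem_iff a _).2 hcab) b (hc b) hab
  · have hpre : c ⁻¹' {k, l} = (k : Set α) ∪ l := by ext a; simp [hmem_iff]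
    exact hpre ▸ hconn k k.2 l l.2 (Subtype.coe_ne_coe.2 hkl)

theorem IsCliqueModel.exists_traversed {ι : Type*} {r : ι → α} {B : ι → Set α}
    (hB : IsCliqueModel G r B) :
    ∃ 𝔎 : Set (Set α),
      (∀ A ∈ 𝔎, (G.induce A).Connected) ∧
      (∀ A ∈ 𝔎, ∀ A' ∈ 𝔎, A ≠ A' → Disjoint A A') ∧
      (∀ A ∈ 𝔎, ∀ A' ∈ 𝔎, A ≠ A' → ∃ a ∈ A, ∃ b ∈ A', G.Adj a b) ∧
      (∀ A ∈ 𝔎, ∃! e, e ∈ Set.range r ∧ e ∈ A) ∧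
      (∀ e ∈ Set.range r, ∃ A ∈ 𝔎, e ∈ A) := by
  refine ⟨Set.range B, ?_, ?_, ?_, ?_, ?_⟩
  · rintro _ ⟨i, rfl⟩
    exact hB.connected i
  · rintro _ ⟨i, rfl⟩ _ ⟨j, rfl⟩ hij
    exact hB.disjoint (ne_of_apply_ne B hij)
  · rintro _ ⟨i, rfl⟩ _ ⟨j, rfl⟩ hij
    exact hB.adj (ne_of_apply_ne B hij)
  · rintro _ ⟨i, rfl⟩
    refine ⟨r i, ⟨⟨i, rfl⟩, hB.root_mem i⟩, ?_⟩
    rintro _ ⟨⟨j, rfl⟩, hj⟩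
    exact by_contra fun hne => Set.disjoint_left.1
      (hB.disjoint (ne_of_apply_ne r hne)) (hB.root_mem j) hj
  · rintro _ ⟨i, rfl⟩
    exact ⟨B i, ⟨i, rfl⟩, hB.root_mem i⟩

end Main

end KempeMinor

theorem kempe_transversal_clique_minor_in_lineGraph_general {V E : Type*} [Finite E]
    (ends : E → Sym2 V) (hloop : ∀ e, ¬(ends e).IsDiag) (𝔠 : Set (Set E))
    (hK : KempeColoring (KempeMinor.lineGraphOf ends) 𝔠)
    (T : Set E) (hT1 : ∀ C ∈ 𝔠, ∃! e, e ∈ T ∧ e ∈ C) :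
    ∃ 𝔎 : Set (Set E),
      (∀ A ∈ 𝔎, ((KempeMinor.lineGraphOf ends).induce A).Connected) ∧
      (∀ A ∈ 𝔎, ∀ B ∈ 𝔎, A ≠ B → Disjoint A B) ∧
      (∀ A ∈ 𝔎, ∀ B ∈ 𝔎, A ≠ B → ∃ a ∈ A, ∃ b ∈ B, (KempeMinor.lineGraphOf ends).Adj a b) ∧
      (∀ A ∈ 𝔎, ∃! e, e ∈ T ∧ e ∈ A) ∧
      (∀ e ∈ T, ∃ A ∈ 𝔎, e ∈ A) := by
  obtain ⟨c, hc, hmem⟩ := KempeMinor.exists_isKempe_of_kempeColoring hK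
  have hr (k : 𝔠) : ∃ e ∈ T, e ∈ (k : Set E) := (hT1 k k.2).exists
  choose r hrT hrk using hr
  obtain rfl : T = Set.range r := by
    refine Set.Subset.antisymm (fun e he => ⟨c e, ?_⟩) (Set.range_subset_iff.2 hrT)
    exact (hT1 (c e) (c e).2).unique ⟨hrT _, hrk _⟩ ⟨he, (hmem e _).2 rfl⟩
  obtain ⟨B, hB⟩ := hc.exists_isCliqueModel hloop fun k => (hmem _ k).1 (hrk k)
  exact hB.exists_traversed

/-- For every transversal `T` of every Kempe coloring of the line graph `L(H)` of a
graph `H`, there exists a complete minor of `L(H)` traversed by `T`: a family of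
connected, pairwise disjoint, pairwise adjacent vertex subsets of `L(H)`, each
containing exactly one element of `T`. -/
theorem kempe_transversal_clique_minor_in_lineGraph {V : Type*} [Fintype V]
    (H : SimpleGraph V) (𝔠 : Set (Set H.edgeSet))
    (hK : KempeColoring (lineGraph H) 𝔠)
    (T : Set H.edgeSet) (hT : T ⊆ ⋃₀ 𝔠) (hT1 : ∀ C ∈ 𝔠, ∃! e, e ∈ T ∧ e ∈ C) :
    ∃ 𝔎 : Set (Set H.edgeSet),
      (∀ A ∈ 𝔎, ((lineGraph H).induce A).Connected) ∧
      (∀ A ∈ 𝔎, ∀ B ∈ 𝔎, A ≠ B → Disjoint A B) ∧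
      (∀ A ∈ 𝔎, ∀ B ∈ 𝔎, A ≠ B → ∃ a ∈ A, ∃ b ∈ B, (lineGraph H).Adj a b) ∧
      (∀ A ∈ 𝔎, ∃! e, e ∈ T ∧ e ∈ A) ∧
      (∀ e ∈ T, ∃ A ∈ 𝔎, e ∈ A) :=
  kempe_transversal_clique_minor_in_lineGraph_general Subtype.val
    (fun e => H.not_isDiag_of_mem_edgeSet e.2) 𝔠 hK T hT1
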